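/- arXiv:2006.01853 — 2 statements merged into one kernel-verified Lean document; each statement's English description precedes it below -/
import Mathlib

section
/- Let d ≥ 1, let E ⊆ ℝ^d be measurable, let Q ⊆ ℝ^d be an axis-parallel cube, and let 0 < λ ≤ 1 be such that |E ∩ Q| = λ|Q|. Then there is a constant C depending only on d such that σ(∂Q \ cl* E) ≤ C · λ^{-(d-1)/d} · σ(∂*E ∩ interior(Q)), where ∂Q is the topological boundary of Q. -/
/-!
Almost every line parallel to a coordinate axis that avoids the measure-theoretic boundary of `E`
inside the cube `Q` runs, within `Q`, entirely through points of density `0` or entirely through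
points of density `1`: the points of small relative measure at all small scales form closed sets, so
Baire's theorem yields an interval of one density with an endpoint of the other, and a density point
argument excludes such jumps on almost every line.

Let `S` be the total measure of the projections of `∂*E ∩ interior Q` along the axes, in the
normalization where `Q` has volume one and `λ = |E ∩ Q|`. Exchanging the coordinates of two
independent random points of `Q` one at a time gives `λ (1 - λ) ≤ S`; together with the
Loomis–Whitney inequality this improves to `λ ^ ((d - 1) / d) ≤ C S` when `λ ≤ 1 / 2`. A line ending
at a density `0` point of a face consists of such points or is exceptional, so the part of a
face outside `cl* E` has measure at most `1 - λ + S`. Projections being `1`-Lipschitz, `S` is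
controlled by the surface measure of `∂*E ∩ interior Q`.
-/

open MeasureTheory Metric Set Filter
open scoped ENNReal Topology

noncomputable section

/-- `ℝ^d` as Euclidean space. -/
abbrev Ed (d : ℕ) := EuclideanSpace ℝ (Fin d)

/-- An axis-parallel cube `∏_i [a_i, a_i + l]` with positive side length `l`. -/
def IsCube {d : ℕ} (Q : Set (Ed d)) : Prop :=
  ∃ (a : Ed d) (l : ℝ), 0 < l ∧ Q = {x : Ed d | ∀ i, x i ∈ Set.Icc (a i) (a i + l)}

/-- The measure-theoretic closure. -/
def mtClosure {d : ℕ} (E : Set (Ed d)) : Set (Ed d) :=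
  {x | 0 < Filter.limsup (fun r : ℝ => volume (ball x r ∩ E) / ENNReal.ofReal (r ^ d)) (𝓝[>] 0)}

/-- The measure-theoretic boundary. -/
def mtBoundary {d : ℕ} (E : Set (Ed d)) : Set (Ed d) :=
  {x | 0 < Filter.limsup (fun r : ℝ => volume (ball x r \ E) / ENNReal.ofReal (r ^ d)) (𝓝[>] 0) ∧
       0 < Filter.limsup (fun r : ℝ => volume (ball x r ∩ E) / ENNReal.ofReal (r ^ d)) (𝓝[>] 0)}

section ProductMeasure

theorem measurePreserving_pi_ite {ι : Type*} [Fintype ι] {α : ι → Type*}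
    [∀ i, MeasurableSpace (α i)] (ν : ∀ i, Measure (α i)) [∀ i, IsProbabilityMeasure (ν i)]
    (s : ι → Prop) [DecidablePred s] :
    MeasurePreserving (fun (p : (∀ i, α i) × (∀ i, α i)) i => if s i then p.2 i else p.1 i)
      ((Measure.pi ν).prod (Measure.pi ν)) (Measure.pi ν) := by
  have hmeas : Measurable fun (p : (∀ i, α i) × (∀ i, α i)) i => if s i then p.2 i else p.1 i :=
    measurable_pi_iff.2 fun i => by split_ifs <;> fun_prop
  refine ⟨hmeas, (Measure.pi_eq fun t ht => ?_).symm⟩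
  have hpre :
      (fun (p : (∀ i, α i) × (∀ i, α i)) i => if s i then p.2 i else p.1 i) ⁻¹' univ.pi t =
      (univ.pi fun i => if s i then univ else t i) ×ˢ
        univ.pi fun i => if s i then t i else univ := by
    ext p
    simp only [mem_preimage, mem_prod, mem_univ_pi, ← forall_and]
    refine forall_congr' fun i => ?_
    split_ifs <;> simp
  rw [Measure.map_apply hmeas (.univ_pi ht), hpre, Measure.prod_prod, Measure.pi_pi,
    Measure.pi_pi, ← Finset.prod_mul_distrib]
  refine Finset.prod_congr rfl fun i _ => ?_
  split_ifs <;> simp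

theorem pi_iInter_le_rpow_sum {ι : Type*} [Fintype ι] [DecidableEq ι] {α : ι → Type*}
    [∀ i, MeasurableSpace (α i)] (ν : ∀ i, Measure (α i)) [∀ i, IsProbabilityMeasure (ν i)]
    {p : ℝ} (hp : Real.HolderConjugate (Fintype.card ι) p) {K : ι → Set (∀ i, α i)}
    (hK : ∀ i, MeasurableSet (K i)) (hcyl : ∀ i, ∀ x ∈ K i, ∀ t, Function.update x i t ∈ K i) :
    Measure.pi ν (⋂ i, K i) ≤ (∑ i, Measure.pi ν (K i)) ^ p := by
  -- On every line through a point of `⋂ i, K i` parallel to the `i`-th axis the function `f` is at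
  -- least `1`, because that line stays in `K i`; this is what the grid-lines inequality needs.
  let f : (∀ i, α i) → ℝ≥0∞ := fun x => ∑ i, (K i).indicator 1 x
  have hf : Measurable f := Finset.measurable_sum _ fun i _ => measurable_one.indicator (hK i)
  have hsum : ∫⁻ x, f x ∂Measure.pi ν = ∑ i, Measure.pi ν (K i) := by
    rw [lintegral_finsetSum _ fun i _ => measurable_one.indicator (hK i)]
    exact Finset.sum_congr rfl fun i _ => lintegral_indicator_one (hK i)
  have hline : ∀ x ∈ ⋂ i, K i, ∀ i, 1 ≤ ∫⁻ t, f (Function.update x i t) ∂ν i := by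
    intro x hx i
    have hone : ∀ t, 1 ≤ f (Function.update x i t) := fun t => by
      have hmem := hcyl i x (mem_iInter.1 hx i) t
      calc (1 : ℝ≥0∞) = (K i).indicator 1 (Function.update x i t) := by simp [hmem]
        _ ≤ f (Function.update x i t) :=
          Finset.single_le_sum (f := fun j => (K j).indicator 1 (Function.update x i t))
            (fun _ _ => zero_le) (Finset.mem_univ i)
    calc (1 : ℝ≥0∞) = ∫⁻ _, 1 ∂ν i := by simp
      _ ≤ _ := lintegral_mono hone
  calc Measure.pi ν (⋂ i, K i)
      = ∫⁻ x, (⋂ i, K i).indicator 1 x ∂Measure.pi ν :=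
        (lintegral_indicator_one (MeasurableSet.iInter hK)).symm
    _ ≤ ∫⁻ x, ∏ i, (∫⁻ t, f (Function.update x i t) ∂ν i) ^ (1 / ((Fintype.card ι : ℝ) - 1))
          ∂Measure.pi ν := by
        refine lintegral_mono (indicator_le fun x hx => ?_)
        exact Finset.one_le_prod' fun i _ =>
          ENNReal.one_le_rpow (hline x hx i) (one_div_pos.2 (sub_pos.2 hp.lt))
    _ ≤ (∫⁻ x, f x ∂Measure.pi ν) ^ p := lintegral_prod_lintegral_pow_le ν hp hf
    _ = _ := by rw [hsum]

variable {n : ℕ} {α : Fin (n + 1) → Type*}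

/-- The vector with the coordinates of `y` before the `k`-th one and those of `x` from there on. As
`k` runs from `0` to `n + 1` these form a path from `x` to `y` whose steps change one coordinate. -/
def splice (k : Fin (n + 2)) (x y : ∀ i, α i) : ∀ i, α i :=
  fun i => if i.castSucc < k then y i else x i

theorem splice_zero (x y : ∀ i, α i) : splice 0 x y = x :=
  funext fun i => by simp [splice]

theorem splice_last (x y : ∀ i, α i) : splice (Fin.last (n + 1)) x y = y :=
  funext fun i => by simp [splice, Fin.castSucc_lt_last]

theorem splice_succ (j : Fin (n + 1)) (x y : ∀ i, α i) :
    splice j.succ x y = j.insertNth (y j) (j.removeNth (splice j.castSucc x y)) := by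
  rw [Fin.insertNth_removeNth]
  funext i
  rcases eq_or_ne i j with rfl | hij
  · simp [splice]
  · simp [splice, hij, hij.le_iff_lt]

theorem splice_mem_univ_pi {R : ∀ i, Set (α i)} {x y : ∀ i, α i} (hx : x ∈ univ.pi R)
    (hy : y ∈ univ.pi R) (k : Fin (n + 2)) : splice k x y ∈ univ.pi R := by
  intro i _
  unfold splice
  split_ifs
  exacts [hy i trivial, hx i trivial]

/-- Within the box `∏ i, R i`, every line parallel to the `j`-th coordinate axis lies entirely in
`A` or entirely in `B`, except for the lines whose projection along that axis belongs to `M j`. -/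
def LineDichotomy (R : ∀ i, Set (α i)) (M : ∀ j : Fin (n + 1), Set (∀ i, α (j.succAbove i)))
    (A B : Set (∀ i, α i)) : Prop :=
  ∀ (j : Fin (n + 1)) (z : ∀ i, α (j.succAbove i)),
    (z ∈ univ.pi fun i => R (j.succAbove i)) → z ∉ M j →
    (∀ t ∈ R j, j.insertNth t z ∈ A) ∨ ∀ t ∈ R j, j.insertNth t z ∈ B

variable {R : ∀ i, Set (α i)} {M : ∀ j : Fin (n + 1), Set (∀ i, α (j.succAbove i))}
  {A B : Set (∀ i, α i)}

namespace LineDichotomy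

theorem symm (h : LineDichotomy R M A B) : LineDichotomy R M B A :=
  fun j z hz hzM => (h j z hz hzM).symm

theorem insertNth_mem (h : LineDichotomy R M A B) (hAB : Disjoint A B) {j : Fin (n + 1)}
    {x : ∀ i, α i} (hx : x ∈ univ.pi R) (hxA : x ∈ A) (hxM : j.removeNth x ∉ M j) {t : α j}
    (ht : t ∈ R j) : j.insertNth t (j.removeNth x) ∈ A := by
  refine (h j (j.removeNth x) (fun i _ => hx _ trivial) hxM).resolve_right (fun hB => ?_) t ht
  have hxB := hB (x j) (hx j trivial)
  rw [Fin.insertNth_self_removeNth] at hxB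
  exact disjoint_left.1 hAB hxA hxB

theorem exists_removeNth_splice_mem (h : LineDichotomy R M A B) (hAB : Disjoint A B)
    {x y : ∀ i, α i} (hx : x ∈ univ.pi R) (hy : y ∈ univ.pi R) (hxA : x ∈ A) (hyB : y ∈ B) :
    ∃ j : Fin (n + 1), j.removeNth (splice j.castSucc x y) ∈ M j := by
  by_contra! hM
  have hpath : ∀ k, splice k x y ∈ A := by
    refine Fin.induction ((splice_zero x y).symm ▸ hxA) fun j hj => ?_
    rw [splice_succ]
    exact h.insertNth_mem hAB (splice_mem_univ_pi hx hy _) hj (hM j) (hy j trivial)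
  exact disjoint_left.1 hAB (splice_last x y ▸ hpath _) hyB

end LineDichotomy

variable [∀ i, MeasurableSpace (α i)] {ν : ∀ i, Measure (α i)} [∀ i, IsProbabilityMeasure (ν i)]

theorem measurePreserving_splice (k : Fin (n + 2)) :
    MeasurePreserving (fun p : (∀ i, α i) × (∀ i, α i) => splice k p.1 p.2)
      ((Measure.pi ν).prod (Measure.pi ν)) (Measure.pi ν) :=
  measurePreserving_pi_ite ν fun i => i.castSucc < k

theorem measurePreserving_removeNth (j : Fin (n + 1)) :
    MeasurePreserving j.removeNth (Measure.pi ν) (Measure.pi fun i => ν (j.succAbove i)) :=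
  measurePreserving_snd.comp (measurePreserving_piFinSuccAbove ν j)

theorem ae_mem_univ_pi (hR : ∀ i, ∀ᵐ t ∂ν i, t ∈ R i) : ∀ᵐ x ∂Measure.pi ν, x ∈ univ.pi R := by
  filter_upwards [eventually_all.2 fun i => (Measure.tendsto_eval_ae_ae (μ := ν)).eventually (hR i)]
    with x hx i _ using hx i

theorem measure_le_of_insertNth_mem (hR : ∀ i, ∀ᵐ t ∂ν i, t ∈ R i) (j : Fin (n + 1))
    {Z : Set (∀ i, α (j.succAbove i))}
    (hZ : ∀ z ∈ Z, (z ∈ univ.pi fun i => R (j.succAbove i)) → ∀ t ∈ R j, j.insertNth t z ∈ A) :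
    Measure.pi (fun i => ν (j.succAbove i)) Z ≤ Measure.pi ν A := by
  calc Measure.pi (fun i => ν (j.succAbove i)) Z
      = ((ν j).prod (Measure.pi fun i => ν (j.succAbove i))) (univ ×ˢ Z) := by simp
    _ = Measure.pi ν (j.removeNth ⁻¹' Z) := by
        rw [← (measurePreserving_piFinSuccAbove ν j).measure_preimage_equiv]
        congr 1
        ext x
        simp
    _ ≤ Measure.pi ν A := by
        refine measure_mono_ae ?_
        filter_upwards [ae_mem_univ_pi hR] with x hx hxZ
        have := hZ _ hxZ (fun i _ => hx _ trivial) (x j) (hx j trivial)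
        rwa [Fin.insertNth_self_removeNth] at this

theorem LineDichotomy.measure_mul_measure_le (h : LineDichotomy R M A B) (hAB : Disjoint A B)
    (hR : ∀ i, ∀ᵐ t ∂ν i, t ∈ R i) :
    Measure.pi ν A * Measure.pi ν B ≤ ∑ j, Measure.pi (fun i => ν (j.succAbove i)) (M j) := by
  -- Sample `x` and `y` independently and exchange their coordinates one at a time: if `x ∈ A` and
  -- `y ∈ B`, some step leaves `A`, so it moves along a line of some `M j`. Every intermediate point
  -- has law `Measure.pi ν`.
  have hcover : ∀ᵐ p ∂(Measure.pi ν).prod (Measure.pi ν), p ∈ A ×ˢ B →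
      p ∈ ⋃ j, (fun p : (∀ i, α i) × (∀ i, α i) =>
        j.removeNth (splice j.castSucc p.1 p.2)) ⁻¹' M j := by
    filter_upwards [Measure.quasiMeasurePreserving_fst.ae (ae_mem_univ_pi hR),
      Measure.quasiMeasurePreserving_snd.ae (ae_mem_univ_pi hR)] with p hp₁ hp₂ hp
    exact mem_iUnion.2 (h.exists_removeNth_splice_mem hAB hp₁ hp₂ hp.1 hp.2)
  calc Measure.pi ν A * Measure.pi ν B
      = (Measure.pi ν).prod (Measure.pi ν) (A ×ˢ B) := (Measure.prod_prod _ _).symm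
    _ ≤ _ := measure_mono_ae hcover
    _ ≤ _ := measure_iUnion_fintype_le _ _
    _ ≤ _ := Finset.sum_le_sum fun j _ =>
        ((measurePreserving_removeNth j).comp
          (measurePreserving_splice j.castSucc)).measure_preimage_le _

theorem rpow_measure_le_sum_image_removeNth (hA : A.Nonempty) :
    Measure.pi ν A ^ ((n : ℝ) / (n + 1)) ≤
      ∑ j : Fin (n + 1), Measure.pi (fun i => ν (j.succAbove i)) (j.removeNth '' A) := by
  rcases n.eq_zero_or_pos with rfl | hn
  · have huniv : ∀ j : Fin 1, j.removeNth '' A = univ := fun _ => (hA.image _).eq_univ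
    simp [huniv]
  · let p : ℝ := (n + 1) / n
    have hn' : (0 : ℝ) < n := by exact_mod_cast hn
    have hp : Real.HolderConjugate (n + 1 : ℕ) p := by
      refine Real.holderConjugate_iff.2 ⟨by push_cast; linarith, ?_⟩
      simp only [p]
      push_cast
      field_simp
      ring
    have hinv : p⁻¹ = (n : ℝ) / (n + 1) := inv_div _ _
    let K : Fin (n + 1) → Set (∀ i, α i) := fun j =>
      j.removeNth ⁻¹' toMeasurable (Measure.pi fun i => ν (j.succAbove i)) (j.removeNth '' A)
    have hcyl : ∀ j, ∀ x ∈ K j, ∀ t, Function.update x j t ∈ K j := fun j x hx t => by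
      simpa only [K, mem_preimage, Fin.removeNth_update] using hx
    have hKm : ∀ j, MeasurableSet (K j) := fun j =>
      (measurePreserving_removeNth (ν := ν) j).measurable (measurableSet_toMeasurable _ _)
    have hAK : A ⊆ ⋂ j, K j := subset_iInter fun j x hx =>
      subset_toMeasurable _ _ (mem_image_of_mem _ hx)
    have hsum : ∀ j, Measure.pi ν (K j) =
        Measure.pi (fun i => ν (j.succAbove i)) (j.removeNth '' A) := fun j => by
      rw [(measurePreserving_removeNth j).measure_preimage
        (measurableSet_toMeasurable _ _).nullMeasurableSet, measure_toMeasurable]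
    rw [← hinv, ENNReal.rpow_inv_le_iff hp.symm.pos]
    simp only [← hsum]
    exact (measure_mono hAK).trans (pi_iInter_le_rpow_sum ν (by simpa using hp) hKm hcyl)

namespace LineDichotomy

theorem rpow_measure_le (h : LineDichotomy R M A B) (hAB : Disjoint A B)
    (hR : ∀ i, ∀ᵐ t ∂ν i, t ∈ R i) (hA : 2⁻¹ ≤ Measure.pi ν A) (hB : Measure.pi ν B ≠ 0) :
    Measure.pi ν B ^ ((n : ℝ) / (n + 1)) ≤
      (2 * n + 3) * ∑ j, Measure.pi (fun i => ν (j.succAbove i)) (M j) := by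
  set S := ∑ j, Measure.pi (fun i => ν (j.succAbove i)) (M j)
  let B' := B ∩ univ.pi R
  have hB' : Measure.pi ν B' = Measure.pi ν B :=
    measure_congr (inter_eventuallyEq_left.2 (by
      filter_upwards [ae_mem_univ_pi hR] with x hx _ using hx))
  -- A line through a point of `B` and outside `M j` lies in `B`, so the projections of `B` are, up
  -- to `M j`, no larger than `B` itself; Loomis–Whitney then bounds `B` by them.
  have hBS : Measure.pi ν B ≤ 2 * S := by
    calc Measure.pi ν B = 2 * (2⁻¹ * Measure.pi ν B) := by
          rw [← mul_assoc, ENNReal.mul_inv_cancel two_ne_zero ENNReal.ofNat_ne_top, one_mul]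
      _ ≤ 2 * (Measure.pi ν A * Measure.pi ν B) := by gcongr
      _ ≤ 2 * S := by gcongr; exact h.measure_mul_measure_le hAB hR
  have himage : ∀ j : Fin (n + 1), Measure.pi (fun i => ν (j.succAbove i)) (j.removeNth '' B') ≤
      Measure.pi (fun i => ν (j.succAbove i)) (M j) + 2 * S := fun j => by
    have hlines : Measure.pi (fun i => ν (j.succAbove i)) (j.removeNth '' B' \ M j) ≤
        Measure.pi ν B := measure_le_of_insertNth_mem hR j <| by
      rintro _ ⟨⟨x, hx, rfl⟩, hxM⟩ - t ht
      exact h.symm.insertNth_mem hAB.symm hx.2 hx.1 hxM ht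
    calc _ ≤ Measure.pi (fun i => ν (j.succAbove i)) (M j ∪ j.removeNth '' B' \ M j) :=
          measure_mono (by rw [union_sdiff_self]; exact subset_union_right)
      _ ≤ _ := measure_union_le _ _
      _ ≤ _ := by gcongr; exact hlines.trans hBS
  calc Measure.pi ν B ^ ((n : ℝ) / (n + 1))
      = Measure.pi ν B' ^ ((n : ℝ) / (n + 1)) := by rw [hB']
    _ ≤ ∑ j : Fin (n + 1), Measure.pi (fun i => ν (j.succAbove i)) (j.removeNth '' B') :=
        rpow_measure_le_sum_image_removeNth (nonempty_of_measure_ne_zero (hB' ▸ hB))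
    _ ≤ ∑ j, (Measure.pi (fun i => ν (j.succAbove i)) (M j) + 2 * S) :=
        Finset.sum_le_sum fun j _ => himage j
    _ = S + (n + 1) * (2 * S) := by simp [Finset.sum_add_distrib, S]
    _ = (2 * n + 3) * S := by ring

theorem measure_mul_rpow_le (h : LineDichotomy R M A B) (hAB : Disjoint A B)
    (hR : ∀ i, ∀ᵐ t ∂ν i, t ∈ R i) (htotal : 1 ≤ Measure.pi ν A + Measure.pi ν B)
    (hB : Measure.pi ν B ≠ 0) {j : Fin (n + 1)} {G : Set (∀ i, α (j.succAbove i))}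
    (hG : ∀ z ∈ G, (z ∈ univ.pi fun i => R (j.succAbove i)) → z ∉ M j →
      ∀ t ∈ R j, j.insertNth t z ∈ A) :
    Measure.pi (fun i => ν (j.succAbove i)) G * Measure.pi ν B ^ ((n : ℝ) / (n + 1)) ≤
      (2 * n + 4) * ∑ j, Measure.pi (fun i => ν (j.succAbove i)) (M j) := by
  set S := ∑ j, Measure.pi (fun i => ν (j.succAbove i)) (M j)
  set g := Measure.pi (fun i => ν (j.succAbove i)) G
  have hg : g ≤ Measure.pi ν A + S := by
    have hlines : Measure.pi (fun i => ν (j.succAbove i)) (G \ M j) ≤ Measure.pi ν A :=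
      measure_le_of_insertNth_mem hR j fun z hz hzR => hG z hz.1 hzR hz.2
    have hMS : Measure.pi (fun i => ν (j.succAbove i)) (M j) ≤ S :=
      Finset.single_le_sum (f := fun j => Measure.pi (fun i => ν (j.succAbove i)) (M j))
        (fun _ _ => zero_le) (Finset.mem_univ j)
    calc g ≤ Measure.pi (fun i => ν (j.succAbove i)) (G \ M j ∪ M j) :=
          measure_mono (by rw [sdiff_union_self]; exact subset_union_left)
      _ ≤ _ := measure_union_le _ _
      _ ≤ _ := by gcongr
  have hpow : Measure.pi ν B ^ ((n : ℝ) / (n + 1)) ≤ 1 :=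
    ENNReal.rpow_le_one prob_le_one (by positivity)
  rcases le_total 2⁻¹ (Measure.pi ν B) with hB2 | hB2
  · calc g * Measure.pi ν B ^ ((n : ℝ) / (n + 1)) ≤ g * 1 := by gcongr
      _ = 2 * (g * 2⁻¹) := by
          rw [mul_left_comm, ENNReal.mul_inv_cancel two_ne_zero ENNReal.ofNat_ne_top]
      _ ≤ 2 * ((Measure.pi ν A + S) * Measure.pi ν B) := by gcongr
      _ = 2 * (Measure.pi ν A * Measure.pi ν B + S * Measure.pi ν B) := by rw [add_mul]
      _ ≤ 2 * (S + S * 1) := by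
          gcongr
          exacts [h.measure_mul_measure_le hAB hR, prob_le_one]
      _ = 4 * S := by ring
      _ ≤ (2 * n + 4) * S := by gcongr; exact le_add_self
  · have hA : 2⁻¹ ≤ Measure.pi ν A := by
      rw [← ENNReal.add_le_add_iff_right (a := 2⁻¹) (by simp), ENNReal.inv_two_add_inv_two]
      exact htotal.trans (by gcongr)
    calc g * Measure.pi ν B ^ ((n : ℝ) / (n + 1)) ≤ 1 * ((2 * n + 3) * S) := by
          gcongr
          exacts [prob_le_one, h.rpow_measure_le hAB hR hA hB]
      _ ≤ (2 * n + 4) * S := by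
          rw [one_mul]; gcongr; norm_num

end LineDichotomy
end ProductMeasure

section OneDimensional

theorem exists_isOpen_inter_subset_of_isLocallyClosed {X ι : Type*}
    [TopologicalSpace X] [T2Space X] [LocallyCompactSpace X] [Countable ι] {F : Set X}
    (hF : IsLocallyClosed F) (hne : F.Nonempty) {c : ι → Set X} (hc : ∀ k, IsClosed (c k))
    (hFc : F ⊆ ⋃ k, c k) : ∃ k U, IsOpen U ∧ (U ∩ F).Nonempty ∧ U ∩ F ⊆ c k := by
  have := hF.locallyCompactSpace
  have := hne.to_subtype
  obtain ⟨k, x, hx⟩ := nonempty_interior_of_iUnion_of_closed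
    (f := fun k => ((↑) : F → X) ⁻¹' c k) (fun k => (hc k).preimage continuous_subtype_val)
    (eq_univ_of_forall fun x => preimage_iUnion ▸ hFc x.2)
  obtain ⟨W, hWk, hW, hxW⟩ := mem_interior.1 hx
  obtain ⟨U, hU, rfl⟩ := isOpen_induced_iff.1 hW
  exact ⟨k, U, hU, ⟨x, hxW, x.2⟩, fun y hy => hWk (a := ⟨y, hy.2⟩) hy.1⟩

/-- No point of `A` is an endpoint of an open interval contained in `B`. -/
def NoJump (A B : Set ℝ) : Prop :=
  ∀ t ∈ A, ∀ s, s ≠ t → ¬ uIoo t s ⊆ B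

variable {A B : Set ℝ}

theorem NoJump.subset_interior_union_interior (h : NoJump A B) (hAB : Disjoint A B) {U : Set ℝ}
    (hU : IsOpen U) (hUA : U \ (interior A ∪ interior B) ⊆ A) :
    U ⊆ interior A ∪ interior B := by
  intro x hxU
  by_contra hx
  obtain ⟨ε, hε, hball⟩ := Metric.isOpen_iff.1 hU x hxU
  obtain ⟨b, hb, hbA⟩ : ∃ b ∈ ball x ε, b ∉ A := by
    by_contra! hsub
    exact hx (Or.inl (mem_interior.2 ⟨ball x ε, hsub, isOpen_ball, mem_ball_self hε⟩))
  have hbB : b ∈ interior B := by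
    by_contra hbB
    exact hbA (hUA ⟨hball hb, fun h => h.elim (fun h => hbA (interior_subset h)) hbB⟩)
  -- Going from `b ∈ interior B` towards `x`, let `y` be the first point outside `interior B`. It is
  -- then in `A` and an endpoint of an interval contained in `B`.
  obtain ⟨y, ⟨hyxb, hyB⟩, hymin⟩ := (isCompact_uIcc.diff isOpen_interior).exists_isMinOn
    ⟨x, left_mem_uIcc (b := b), fun h => hx (Or.inr h)⟩
    (continuous_id.dist (continuous_const (y := b))).continuousOn
  have hyb : b ≠ y := fun h => hyB (h ▸ hbB)
  have hsub : uIoo y b ⊆ interior B := fun z hz => by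
    by_contra hzB
    have hzxb : z ∈ uIcc x b := uIcc_subset_uIcc_right hyxb (uIoo_subset_uIcc_self hz)
    have hle : |y - b| ≤ |z - b| := hymin ⟨hzxb, hzB⟩
    rcases hyb.lt_or_gt with hlt | hlt
    · rw [uIoo_of_gt hlt] at hz
      grind
    · rw [uIoo_of_lt hlt] at hz
      grind
  have hyA : y ∉ interior A := fun hyA => by
    have hycl : y ∈ closure (interior B) := closure_mono hsub (by
      rw [closure_uIoo hyb.symm]; exact left_mem_uIcc)
    exact disjoint_left.1 ((hAB.mono interior_subset interior_subset).closure_right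
      isOpen_interior) hyA hycl
  have hyU : y ∈ U := hball (convex_ball x ε |>.ordConnected.uIcc_subset (mem_ball_self hε) hb hyxb)
  exact h y (hUA ⟨hyU, by simp [hyA, hyB]⟩) b hyb (hsub.trans interior_subset)

theorem Ioo_subset_or_subset_of_noJump {α β : ℝ} {ι : Type*} [Countable ι] {a b : ι → Set ℝ}
    (hcover : Ioo α β ⊆ A ∪ B) (hAB : Disjoint A B) (hnoAB : NoJump A B) (hnoBA : NoJump B A)
    (ha : ∀ k, IsClosed (a k)) (hAa : A ⊆ ⋃ k, a k) (haB : ∀ k, Disjoint (a k) B)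
    (hb : ∀ k, IsClosed (b k)) (hBb : B ⊆ ⋃ k, b k) (hbA : ∀ k, Disjoint (b k) A) :
    Ioo α β ⊆ A ∨ Ioo α β ⊆ B := by
  have hO : IsOpen (interior A ∪ interior B) := isOpen_interior.union isOpen_interior
  suffices hsub : Ioo α β ⊆ interior A ∪ interior B from
    (isPreconnected_Ioo.subset_or_subset isOpen_interior isOpen_interior
      (hAB.mono interior_subset interior_subset) hsub).imp
      (·.trans interior_subset) (·.trans interior_subset)
  rw [← sdiff_eq_empty, ← not_nonempty_iff_eq_empty]
  intro hne
  -- By Baire, one of the closed sets `a k` or `b k` contains a relatively open piece of the set of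
  -- points of the interval where neither `A` nor `B` is a neighbourhood.
  obtain ⟨k, U, hU, ⟨x, hxU, hx, hxO⟩, hUk⟩ :=
    exists_isOpen_inter_subset_of_isLocallyClosed
      (isOpen_Ioo.isLocallyClosed.inter hO.isClosed_compl.isLocallyClosed)
      hne (c := Sum.elim a b)
        (Sum.rec ha hb) (by
          rw [iUnion_sum]
          exact (inter_subset_left.trans hcover).trans (union_subset_union hAa hBb))
  have hV : IsOpen (U ∩ Ioo α β) := hU.inter isOpen_Ioo
  have hmem : (U ∩ Ioo α β) \ (interior A ∪ interior B) ⊆ Sum.elim a b k :=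
    fun y hy => hUk ⟨hy.1.1, hy.1.2, hy.2⟩
  cases k with
  | inl k =>
    refine hxO (hnoAB.subset_interior_union_interior hAB hV (fun y hy => ?_) ⟨hxU, hx⟩)
    exact (hcover hy.1.2).resolve_right (disjoint_left.1 (haB k) (hmem hy))
  | inr k =>
    rw [union_comm] at hmem hxO
    refine hxO (hnoBA.subset_interior_union_interior hAB.symm hV (fun y hy => ?_) ⟨hxU, hx⟩)
    exact (hcover hy.1.2).resolve_left (disjoint_left.1 (hbA k) (hmem hy))

end OneDimensional

section Density

/-- The points at which `E` has `μ`-density zero, measured in closed balls. -/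
def zeroDensity {X : Type*} [PseudoMetricSpace X] [MeasurableSpace X] (μ : Measure X) (E : Set X) :
    Set X :=
  {x | Tendsto (fun r => μ (E ∩ closedBall x r) / μ (closedBall x r)) (𝓝[>] 0) (𝓝 0)}

/-- The points at which `E` has relative `μ`-measure at most `θ` at all scales below `δ`. For
`θ > 0` these sets cover `zeroDensity μ E` as `δ → 0`, but unlike it they are closed. -/
def lowDensity {X : Type*} [PseudoMetricSpace X] [MeasurableSpace X] (μ : Measure X) (θ : ℝ≥0∞)
    (δ : ℝ) (E : Set X) : Set X :=
  {x | ∀ r ∈ Ioo 0 δ, μ (E ∩ closedBall x r) ≤ θ * μ (closedBall x r)}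

section MetricSpace

variable {X Y : Type*} [PseudoMetricSpace X] [MeasurableSpace X] [PseudoMetricSpace Y]
  [MeasurableSpace Y] {μ : Measure X} {ν : Measure Y} {θ : ℝ≥0∞} {E : Set X}

theorem lowDensity_anti : Antitone fun δ => lowDensity μ θ δ E :=
  fun _ _ h _ hx r hr => hx r ⟨hr.1, hr.2.trans_le h⟩

theorem zeroDensity_subset_iUnion_lowDensity (hθ : θ ≠ 0) (hθ' : θ ≠ ∞) :
    zeroDensity μ E ⊆ ⋃ k : ℕ, lowDensity μ θ (1 / (k + 1)) E := by
  intro x hx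
  obtain ⟨δ, hδ, hsub⟩ := mem_nhdsGT_iff_exists_Ioo_subset.1
    (hx.eventually_lt_const (pos_iff_ne_zero.2 hθ))
  obtain ⟨k, hk⟩ := exists_nat_one_div_lt (show (0 : ℝ) < δ from hδ)
  refine mem_iUnion.2 ⟨k, fun r hr => ?_⟩
  exact (ENNReal.div_le_iff_le_mul (.inr hθ') (.inr hθ)).1
    (le_of_lt (hsub ⟨hr.1, hr.2.trans hk⟩))

theorem preimage_zeroDensity (f : X ≃ᵐ Y) (hiso : Isometry f) (hf : MeasurePreserving f μ ν)
    (E : Set Y) : f ⁻¹' zeroDensity ν E = zeroDensity μ (f ⁻¹' E) := by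
  ext x
  simp only [zeroDensity, mem_preimage, mem_ofPred_eq, ← hiso.preimage_closedBall,
    ← preimage_inter, hf.measure_preimage_equiv]

theorem disjoint_lowDensity_zeroDensity_compl [ProperSpace X] [μ.IsOpenPosMeasure]
    [IsFiniteMeasureOnCompacts μ] (hθ : θ < 1) {δ : ℝ} (hδ : 0 < δ)
    (E : Set X) : Disjoint (lowDensity μ θ δ E) (zeroDensity μ Eᶜ) := by
  refine disjoint_left.2 fun x hx hx' => hθ.not_ge ?_
  have hbound : ∀ᶠ r in 𝓝[>] (0 : ℝ),
      1 ≤ θ + μ (Eᶜ ∩ closedBall x r) / μ (closedBall x r) := by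
    filter_upwards [Ioo_mem_nhdsGT hδ] with r hr
    have hpos : μ (closedBall x r) ≠ 0 := (measure_closedBall_pos μ x hr.1).ne'
    have hfin : μ (closedBall x r) ≠ ∞ := measure_closedBall_lt_top.ne
    rw [← ENNReal.mul_le_mul_iff_left hpos hfin]
    calc 1 * μ (closedBall x r) ≤ μ (E ∩ closedBall x r) + μ (Eᶜ ∩ closedBall x r) := by
          rw [one_mul, inter_comm E, inter_comm Eᶜ]
          exact measure_le_inter_add_sdiff _ _ _
      _ ≤ θ * μ (closedBall x r) + μ (Eᶜ ∩ closedBall x r) := by gcongr; exact hx r hr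
      _ = _ := by rw [add_mul, ENNReal.div_mul_cancel hpos hfin]
  simpa using ge_of_tendsto (tendsto_const_nhds.add hx') hbound

theorem disjoint_zeroDensity_compl [ProperSpace X] [μ.IsOpenPosMeasure]
    [IsFiniteMeasureOnCompacts μ] (E : Set X) :
    Disjoint (zeroDensity μ E) (zeroDensity μ Eᶜ) := by
  have hhalf : (2⁻¹ : ℝ≥0∞) < 1 := ENNReal.one_half_lt_one
  exact Disjoint.mono_left (zeroDensity_subset_iUnion_lowDensity (θ := 2⁻¹) (by simp) (by simp))
    (disjoint_iUnion_left.2 fun k =>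
      disjoint_lowDensity_zeroDensity_compl hhalf (by positivity) E)

theorem zeroDensity_compl_ae_eq {X : Type*} [MetricSpace X] [SecondCountableTopology X]
    [MeasurableSpace X] [BorelSpace X] (μ : Measure X) [IsUnifLocDoublingMeasure μ]
    [IsLocallyFiniteMeasure μ] {E : Set X} (hE : MeasurableSet E) :
    zeroDensity μ Eᶜ =ᵐ[μ] E := by
  rw [eventuallyEq_set]
  filter_upwards [(IsUnifLocDoublingMeasure.vitaliFamily μ
    1).ae_tendsto_measure_inter_div_of_measurableSet hE.compl] with x hx
  have hlim := hx.comp (IsUnifLocDoublingMeasure.tendsto_closedBall_filterAt μ (K := 1)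
    (fun _ : ℝ => x) id tendsto_id (by
      filter_upwards [self_mem_nhdsWithin] with r hr
      simpa using (show (0 : ℝ) < r from hr).le))
  refine ⟨fun hzero => ?_, fun hxE => ?_⟩
  · by_contra hxE
    have := tendsto_nhds_unique hzero hlim
    simp [show x ∉ E from hxE] at this
  · rw [indicator_of_notMem (by simpa using hxE)] at hlim
    exact hlim

end MetricSpace

variable {X : Type*} [NormedAddCommGroup X] [NormedSpace ℝ X] [FiniteDimensional ℝ X]
  [MeasurableSpace X] [BorelSpace X] (μ : Measure X) [μ.IsAddHaarMeasure]

theorem isClosed_lowDensity {θ : ℝ≥0∞} (hθ : θ ≠ ∞) (δ : ℝ) (E : Set X) :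
    IsClosed (lowDensity μ θ δ E) := by
  refine isClosed_of_closure_subset fun x hx r hr => ?_
  have hbound : ∀ᶠ s in 𝓝[>] r, μ (E ∩ closedBall x r) ≤
      θ * (ENNReal.ofReal (s ^ Module.finrank ℝ X) * μ (ball 0 1)) := by
    filter_upwards [Ioo_mem_nhdsGT hr.2] with s hs
    have hs0 : 0 < s := hr.1.trans hs.1
    obtain ⟨y, hy, hxy⟩ := Metric.mem_closure_iff.1 hx (s - r) (sub_pos.2 hs.1)
    calc μ (E ∩ closedBall x r) ≤ μ (E ∩ closedBall y s) := by
          gcongr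
          exact closedBall_subset_closedBall' (by linarith)
      _ ≤ θ * μ (closedBall y s) := hy s ⟨hs0, hs.2⟩
      _ = _ := by rw [Measure.addHaar_closedBall _ _ hs0.le]
  have hlim : Tendsto (fun s : ℝ => θ * (ENNReal.ofReal (s ^ Module.finrank ℝ X) * μ (ball 0 1)))
      (𝓝[>] r) (𝓝 (θ * μ (closedBall x r))) := by
    rw [Measure.addHaar_closedBall _ _ hr.1.le]
    refine Tendsto.mono_left (Continuous.tendsto ?_ r) nhdsWithin_le_nhds
    exact (ENNReal.continuous_const_mul hθ).comp
      ((ENNReal.continuous_mul_const measure_ball_lt_top.ne).comp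
        (ENNReal.continuous_ofReal.comp (continuous_pow _)))
  exact ge_of_tendsto hlim hbound

end Density

section Jump

theorem exists_eventually_half_measure_closedBall_le {X : Type*} [MetricSpace X]
    [SecondCountableTopology X] [MeasurableSpace X] [BorelSpace X] (μ : Measure X)
    [IsUnifLocDoublingMeasure μ] [IsLocallyFiniteMeasure μ] {D : Set X} (hD : μ D ≠ 0) :
    ∃ x, ∀ᶠ r in 𝓝[>] 0, 2⁻¹ * μ (closedBall x r) ≤ μ (D ∩ closedBall x r) := by
  have : NeBot (ae (μ.restrict D)) := ae_neBot.2 (by simpa using hD)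
  obtain ⟨x, hx⟩ := (IsUnifLocDoublingMeasure.ae_tendsto_measure_inter_div μ D 1).exists
  have hlim : Tendsto (fun r => μ (D ∩ closedBall x r) / μ (closedBall x r)) (𝓝[>] 0) (𝓝 1) :=
    hx (fun _ => x) id tendsto_id (by
      filter_upwards [self_mem_nhdsWithin] with r hr
      simpa using (show (0 : ℝ) < r from hr).le)
  refine ⟨x, ?_⟩
  filter_upwards [hlim.eventually_const_lt ENNReal.one_half_lt_one] with r hr
  exact ENNReal.mul_le_of_le_div hr.le

theorem exists_Ioo_prod_subset_closedBall_inter {Y : Type*} [PseudoMetricSpace Y]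
    {S : Set (ℝ × Y)} {D : Set Y} (hD : D.Nonempty) {h : Y → ℝ} {p δ r : ℝ} {y : Y} (hr : 0 < r)
    (hrδ : 4 * r ≤ δ) (hh : ∀ z ∈ D, h z ∈ Icc p (p + δ / 2))
    (hS : ∀ z ∈ D, ∀ t ∈ Ioo (h z) (h z + δ), (t, z) ∈ S) (hDy : D ⊆ closedBall y r) :
    ∃ z ∈ D, Ioo (h z + r) (h z + 2 * r) ×ˢ D ⊆ S ∩ closedBall (h z, z) (2 * r) := by
  have hbdd : BddAbove (h '' D) := ⟨p + δ / 2, forall_mem_image.2 fun z hz => (hh z hz).2⟩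
  obtain ⟨_, ⟨z, hz, rfl⟩, hsup⟩ :=
    exists_lt_of_lt_csSup (hD.image h) (show sSup (h '' D) - r < sSup (h '' D) by linarith)
  refine ⟨z, hz, ?_⟩
  rintro ⟨t, w⟩ ⟨ht, hw⟩
  have hwz : h w ≤ sSup (h '' D) := le_csSup hbdd (mem_image_of_mem h hw)
  have hz' := hh z hz
  have hw' := hh w hw
  refine ⟨hS w hw t ⟨by linarith [ht.1], by linarith [ht.2, hz'.2, hw'.1]⟩, ?_⟩
  rw [mem_closedBall, Prod.dist_eq, max_le_iff, Real.dist_eq, abs_le]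
  refine ⟨⟨by linarith [ht.1], by linarith [ht.2]⟩, (dist_triangle_right w z y).trans ?_⟩
  linarith [mem_closedBall.1 (hDy hz), mem_closedBall.1 (hDy hw)]

variable {Y : Type*} [NormedAddCommGroup Y] [NormedSpace ℝ Y] [FiniteDimensional ℝ Y]
  [MeasurableSpace Y] [BorelSpace Y] {ν : Measure Y} [ν.IsAddHaarMeasure] {E : Set (ℝ × Y)}

variable (ν) in
theorem volume_prod_closedBall_two_mul (t : ℝ) (y z : Y) {r : ℝ} (hr : 0 ≤ r) :
    (volume.prod ν) (closedBall (t, y) (2 * r)) =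
      2 ^ (Module.finrank ℝ Y + 2) * ENNReal.ofReal r * ν (closedBall z r) := by
  rw [← closedBall_prod_same, Measure.prod_prod, Real.volume_closedBall,
    Measure.addHaar_closedBall ν y (by positivity), Measure.addHaar_closedBall ν z hr, mul_pow,
    ENNReal.ofReal_mul zero_le_two, ENNReal.ofReal_mul zero_le_two,
    ENNReal.ofReal_mul (by positivity), ENNReal.ofReal_pow zero_le_two, ENNReal.ofReal_ofNat]
  ring

theorem measure_setOf_uniform_jump_eq_zero (hE : MeasurableSet E) {θ : ℝ≥0∞}
    (hθ : θ * 2 ^ (Module.finrank ℝ Y + 2) < 2⁻¹) (p : ℝ) {δ : ℝ} (hδ : 0 < δ) :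
    ν {z | ∃ t ∈ Icc p (p + δ / 2), (t, z) ∈ lowDensity (volume.prod ν) θ δ E ∧
      ∀ s ∈ Ioo t (t + δ), (s, z) ∈ zeroDensity (volume.prod ν) Eᶜ} = 0 := by
  -- Otherwise take a density point `y` of this set and, near `y`, a `z` whose height `h z`
  -- is almost the largest. A cylinder just above `h z` then fills a fixed proportion of the ball
  -- of radius `2 * r` around `(h z, z)` with density points of `E`, contrary to the choice of `θ`.
  by_contra hD
  set D := {z | ∃ t ∈ Icc p (p + δ / 2), (t, z) ∈ lowDensity (volume.prod ν) θ δ E ∧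
      ∀ s ∈ Ioo t (t + δ), (s, z) ∈ zeroDensity (volume.prod ν) Eᶜ}
  obtain ⟨y, hy⟩ := exists_eventually_half_measure_closedBall_le ν hD
  obtain ⟨r, hDr, hr, hrδ⟩ :=
    (hy.and (Ioo_mem_nhdsGT (show 0 < δ / 4 by positivity))).exists
  have hball : 0 < ν (closedBall y r) := measure_closedBall_pos ν y hr
  have hfin : ν (closedBall y r) ≠ ∞ := measure_closedBall_lt_top.ne
  have hne : (D ∩ closedBall y r).Nonempty := nonempty_of_measure_ne_zero
    (((ENNReal.mul_pos (by simp) hball.ne').trans_le hDr).ne')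
  choose! h hIcc hlow hseg using fun z (hz : z ∈ D) => hz
  obtain ⟨z, hz, hsub⟩ := exists_Ioo_prod_subset_closedBall_inter hne hr (by linarith)
    (fun z hz => hIcc z hz.1) (fun z hz => hseg z hz.1) inter_subset_right
  refine hθ.not_ge ?_
  have hcyl : ENNReal.ofReal r * ν (closedBall y r) ≠ 0 := by simp [hr, hball.ne']
  rw [← ENNReal.mul_le_mul_iff_left hcyl (ENNReal.mul_ne_top (by simp) hfin)]
  calc 2⁻¹ * (ENNReal.ofReal r * ν (closedBall y r))
      = ENNReal.ofReal r * (2⁻¹ * ν (closedBall y r)) := by ring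
    _ ≤ ENNReal.ofReal r * ν (D ∩ closedBall y r) := by gcongr
    _ = (volume.prod ν) (Ioo (h z + r) (h z + 2 * r) ×ˢ (D ∩ closedBall y r)) := by
        rw [Measure.prod_prod, Real.volume_Ioo]; ring_nf
    _ ≤ (volume.prod ν) (zeroDensity (volume.prod ν) Eᶜ ∩ closedBall (h z, z) (2 * r)) :=
        measure_mono hsub
    _ = (volume.prod ν) (E ∩ closedBall (h z, z) (2 * r)) :=
        measure_congr ((zeroDensity_compl_ae_eq _ hE).inter (ae_eq_refl _))
    _ ≤ θ * (volume.prod ν) (closedBall (h z, z) (2 * r)) :=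
        hlow z hz.1 _ ⟨by linarith, by linarith⟩
    _ = _ := by rw [volume_prod_closedBall_two_mul ν _ _ y hr.le]; ring

theorem ae_forall_not_Ioo_subset (hE : MeasurableSet E) :
    ∀ᵐ z ∂ν, ∀ t, (t, z) ∈ zeroDensity (volume.prod ν) E → ∀ s > t,
      ¬ Ioo t s ⊆ {u | (u, z) ∈ zeroDensity (volume.prod ν) Eᶜ} := by
  obtain ⟨θ, hθ0, hθ⟩ := ENNReal.exists_nnreal_pos_mul_lt
    (show (2 : ℝ≥0∞) ^ (Module.finrank ℝ Y + 2) ≠ ∞ by simp) (show (2⁻¹ : ℝ≥0∞) ≠ 0 by simp)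
  have hnull := ae_all_iff.2 fun k : ℕ => ae_all_iff.2 fun m : ℤ =>
    measure_eq_zero_iff_ae_notMem.1 <| measure_setOf_uniform_jump_eq_zero (ν := ν) hE hθ
      (m * (1 / (k + 1) / 2)) (δ := 1 / (k + 1)) (by positivity)
  filter_upwards [hnull] with z hz t ht s hts hsub
  obtain ⟨k₁, hk₁⟩ := mem_iUnion.1 (zeroDensity_subset_iUnion_lowDensity
    (ENNReal.coe_ne_zero.2 hθ0.ne') ENNReal.coe_ne_top ht)
  obtain ⟨k₂, hk₂⟩ := exists_nat_one_div_lt (sub_pos.2 hts)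
  obtain ⟨k, hkk₁, hkk₂⟩ : ∃ k : ℕ, k₁ ≤ k ∧ k₂ ≤ k :=
    ⟨max k₁ k₂, le_max_left _ _, le_max_right _ _⟩
  have hδ : (0 : ℝ) < 1 / (k + 1) / 2 := by positivity
  refine hz k ⌊t / (1 / (k + 1) / 2)⌋ ⟨t, ⟨?_, ?_⟩, ?_, fun u hu => hsub ⟨hu.1, ?_⟩⟩
  · exact (le_div_iff₀ hδ).1 (Int.floor_le _)
  · linarith [(div_lt_iff₀ hδ).1 (Int.lt_floor_add_one (t / (1 / (k + 1) / 2)))]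
  · exact lowDensity_anti (Nat.one_div_le_one_div hkk₁) hk₁
  · linarith [hu.2, Nat.one_div_le_one_div (α := ℝ) hkk₂]

theorem ae_noJump_zeroDensity_zeroDensity_compl (hE : MeasurableSet E) :
    ∀ᵐ z ∂ν, NoJump {t | (t, z) ∈ zeroDensity (volume.prod ν) E}
      {t | (t, z) ∈ zeroDensity (volume.prod ν) Eᶜ} := by
  let f : ℝ × Y ≃ᵐ ℝ × Y := (MeasurableEquiv.neg ℝ).prodCongr (MeasurableEquiv.refl Y)
  have hf : MeasurePreserving f (volume.prod ν) (volume.prod ν) :=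
    (Measure.measurePreserving_neg volume).prod (MeasurePreserving.id ν)
  have hiso : Isometry f := (IsometryEquiv.neg ℝ).isometry.prodMap isometry_id
  filter_upwards [ae_forall_not_Ioo_subset hE, ae_forall_not_Ioo_subset (f.measurable hE)]
    with z hright hleft t ht s hst
  rcases hst.lt_or_gt with hlt | hlt
  · rw [uIoo_of_gt hlt]
    intro hsub
    rw [← preimage_compl, ← preimage_zeroDensity f hiso hf,
      ← preimage_zeroDensity f hiso hf] at hleft
    have ht' : (- -t, z) ∈ zeroDensity (volume.prod ν) E := (neg_neg t).symm ▸ ht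
    exact hleft (-t) ht' (-s) (neg_lt_neg hlt) fun u hu =>
      hsub (show -u ∈ Ioo s t from ⟨lt_neg_of_lt_neg hu.2, neg_lt_of_neg_lt hu.1⟩)
  · rw [uIoo_of_lt hlt]
    exact hright t ht s hlt

end Jump

section Slices

variable {n : ℕ}

theorem isometry_insertNth {α : Fin (n + 1) → Type*} [∀ i, PseudoMetricSpace (α i)]
    (j : Fin (n + 1)) : Isometry fun p : α j × (∀ i, α (j.succAbove i)) => j.insertNth p.1 p.2 :=
  Isometry.of_dist_eq fun p q => Fin.dist_insertNth_insertNth j p.1 q.1 p.2 q.2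

/-- The `j`-th coordinates of the points of `A` whose remaining coordinates are `z`. -/
def slice (j : Fin (n + 1)) (z : Fin n → ℝ) (A : Set (Fin (n + 1) → ℝ)) : Set ℝ :=
  {t | j.insertNth t z ∈ A}

variable {j : Fin (n + 1)} {z : Fin n → ℝ} {F : Set (Fin (n + 1) → ℝ)}

theorem slice_zeroDensity : slice j z (zeroDensity volume F) = {t | (t, z) ∈ zeroDensity
    (volume.prod volume) ((fun p : ℝ × (Fin n → ℝ) => j.insertNth p.1 p.2) ⁻¹' F)} := by
  have hiso : Isometry (MeasurableEquiv.piFinSuccAbove (fun _ => ℝ) j).symm :=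
    isometry_insertNth (α := fun _ => ℝ) j
  exact congrArg (fun A : Set (ℝ × (Fin n → ℝ)) => {t | (t, z) ∈ A}) (preimage_zeroDensity _ hiso
    (volume_preserving_piFinSuccAbove (fun _ => ℝ) j).symm F)

theorem ae_noJump_slice (hF : MeasurableSet F) : ∀ᵐ z,
    NoJump (slice j z (zeroDensity volume F)) (slice j z (zeroDensity volume Fᶜ)) := by
  simp only [slice_zeroDensity, preimage_compl]
  exact ae_noJump_zeroDensity_zeroDensity_compl
    ((MeasurableEquiv.piFinSuccAbove (fun _ => ℝ) j).symm.measurable hF)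

theorem isClosed_slice {A : Set (Fin (n + 1) → ℝ)} (hA : IsClosed A) : IsClosed (slice j z A) :=
  hA.preimage (continuous_id.finInsertNth j continuous_const)

theorem disjoint_slice {A B : Set (Fin (n + 1) → ℝ)} (h : Disjoint A B) :
    Disjoint (slice j z A) (slice j z B) :=
  h.preimage _

theorem slice_zeroDensity_subset_iUnion : slice j z (zeroDensity volume F) ⊆
    ⋃ k : ℕ, slice j z (lowDensity volume 2⁻¹ (1 / (k + 1)) F) := by
  intro t ht
  have hx : j.insertNth t z ∈ ⋃ k : ℕ, lowDensity volume 2⁻¹ (1 / (k + 1)) F :=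
    zeroDensity_subset_iUnion_lowDensity (by simp) (by simp) ht
  obtain ⟨k, hk⟩ := mem_iUnion.1 hx
  exact mem_iUnion.2 ⟨k, hk⟩

theorem disjoint_slice_lowDensity (k : ℕ) :
    Disjoint (slice j z (lowDensity volume 2⁻¹ (1 / (k + 1)) F))
      (slice j z (zeroDensity volume Fᶜ)) :=
  disjoint_slice (disjoint_lowDensity_zeroDensity_compl ENNReal.one_half_lt_one (by positivity) F)

theorem Ioo_subset_slice_or_subset_slice {α β : ℝ}
    (hcover : Ioo α β ⊆ slice j z (zeroDensity volume F ∪ zeroDensity volume Fᶜ))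
    (hF : NoJump (slice j z (zeroDensity volume F)) (slice j z (zeroDensity volume Fᶜ)))
    (hFc : NoJump (slice j z (zeroDensity volume Fᶜ)) (slice j z (zeroDensity volume F))) :
    Ioo α β ⊆ slice j z (zeroDensity volume F) ∨ Ioo α β ⊆ slice j z (zeroDensity volume Fᶜ) :=
  Ioo_subset_or_subset_of_noJump hcover (disjoint_slice (disjoint_zeroDensity_compl F)) hF hFc
    (fun _ => isClosed_slice (isClosed_lowDensity volume (by simp) _ F))
    slice_zeroDensity_subset_iUnion disjoint_slice_lowDensity
    (fun _ => isClosed_slice (isClosed_lowDensity volume (by simp) _ Fᶜ))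
    slice_zeroDensity_subset_iUnion
    (fun k => by simpa using disjoint_slice_lowDensity (F := Fᶜ) (j := j) (z := z) k)

end Slices

section Cubes

/-- The open axis-parallel cube with lower corner `a` and side length `l`. -/
def openCube {m : ℕ} (a : Fin m → ℝ) (l : ℝ) : Set (Fin m → ℝ) :=
  univ.pi fun i => Ioo (a i) (a i + l)

/-- The closed axis-parallel cube with lower corner `a` and side length `l`. -/
def closedCube {m : ℕ} (a : Fin m → ℝ) (l : ℝ) : Set (Fin m → ℝ) :=
  univ.pi fun i => Icc (a i) (a i + l)

/-- The uniform probability measure on a cube, as a product measure. -/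
def cubeProb {m : ℕ} (a : Fin m → ℝ) (l : ℝ) : Measure (Fin m → ℝ) :=
  Measure.pi fun i => ProbabilityTheory.cond volume (Ioo (a i) (a i + l))

section Volume

variable {m : ℕ} (a : Fin m → ℝ) {l : ℝ}

theorem measurableSet_openCube : MeasurableSet (openCube a l) :=
  MeasurableSet.univ_pi fun _ => measurableSet_Ioo

theorem openCube_ae_eq_closedCube : openCube a l =ᵐ[volume] closedCube a l := by
  simp only [openCube, closedCube, pi_univ_Icc]
  exact Measure.univ_pi_Ioo_ae_eq_Icc

theorem volume_closedCube : volume (closedCube a l) = ENNReal.ofReal l ^ m := by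
  rw [closedCube, volume_pi_pi]
  simp

theorem isProbabilityMeasure_cond_Ioo (c : ℝ) (hl : 0 < l) :
    IsProbabilityMeasure (ProbabilityTheory.cond volume (Ioo c (c + l))) :=
  ProbabilityTheory.cond_isProbabilityMeasure_of_finite (by simpa using hl) (by simp)

variable (l) in
theorem cubeProb_eq :
    cubeProb a l = (ENNReal.ofReal l ^ m)⁻¹ • volume.restrict (openCube a l) := by
  refine Measure.pi_eq fun s hs => ?_
  rw [Measure.smul_apply, Measure.restrict_apply (MeasurableSet.univ_pi hs), openCube,
    ← pi_inter_distrib, volume_pi_pi, smul_eq_mul]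
  simp only [ProbabilityTheory.cond_apply measurableSet_Ioo, Real.volume_Ioo, add_sub_cancel_left,
    Finset.prod_mul_distrib, Finset.prod_const, Finset.card_univ, Fintype.card_fin,
    ENNReal.inv_pow, inter_comm]

variable (l) in
theorem cubeProb_apply (A : Set (Fin m → ℝ)) :
    cubeProb a l A = (ENNReal.ofReal l ^ m)⁻¹ * volume (A ∩ closedCube a l) := by
  rw [cubeProb_eq, Measure.smul_apply, smul_eq_mul,
    Measure.restrict_apply' (measurableSet_openCube a),
    measure_congr ((ae_eq_refl A).inter (openCube_ae_eq_closedCube a))]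

theorem cubeProb_of_volume_inter_closedCube (hl : 0 < l) {A : Set (Fin m → ℝ)} {q : ℝ≥0∞}
    (h : volume (A ∩ closedCube a l) = q * volume (closedCube a l)) : cubeProb a l A = q := by
  rw [cubeProb_apply, h, volume_closedCube, mul_left_comm,
    ENNReal.inv_mul_cancel (pow_ne_zero _ (by simpa using hl)) (by simp), mul_one]

theorem cubeProb_absolutelyContinuous : cubeProb a l ≪ volume := by
  rw [cubeProb_eq]
  exact Measure.restrict_le_self.absolutelyContinuous.smul_left _

end Volume

variable {n : ℕ} (F : Set (Fin (n + 1) → ℝ)) (a : Fin (n + 1) → ℝ) (l : ℝ)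

/-- The lines parallel to the `j`-th coordinate axis, given by their remaining coordinates, that
meet the cube in a point where `F` has density neither `0` nor `1` or that carry a jump from one of
these densities to the other. -/
def exceptionalLines (j : Fin (n + 1)) : Set (Fin n → ℝ) :=
  j.removeNth '' (openCube a l \ (zeroDensity volume F ∪ zeroDensity volume Fᶜ)) ∪
    {z | ¬ (NoJump (slice j z (zeroDensity volume F)) (slice j z (zeroDensity volume Fᶜ)) ∧
      NoJump (slice j z (zeroDensity volume Fᶜ)) (slice j z (zeroDensity volume F)))}

variable {F}

theorem volume_exceptionalLines_le (hF : MeasurableSet F) (j : Fin (n + 1)) :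
    volume (exceptionalLines F a l j) ≤ volume
      (j.removeNth '' (openCube a l \ (zeroDensity volume F ∪ zeroDensity volume Fᶜ))) := by
  have hjump := (ae_noJump_slice (j := j) hF).and (ae_noJump_slice (j := j) hF.compl)
  rw [compl_compl] at hjump
  exact (measure_union_le _ _).trans_eq (by rw [ae_iff.1 hjump, add_zero])

theorem lineDichotomy_exceptionalLines : LineDichotomy (fun i => Ioo (a i) (a i + l))
    (exceptionalLines F a l) (zeroDensity volume F) (zeroDensity volume Fᶜ) := by
  intro j z hz hzM
  rw [exceptionalLines, mem_union, not_or, mem_ofPred_eq, not_not] at hzM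
  refine Ioo_subset_slice_or_subset_slice (fun t ht => ?_) hzM.2.1 hzM.2.2
  by_contra hcon
  refine hzM.1 ⟨j.insertNth t z, ⟨?_, hcon⟩, Fin.removeNth_insertNth _ _ _⟩
  exact Fin.forall_iff_succAbove j |>.2
    ⟨fun _ => by simpa using ht, fun i _ => by simpa using hz i trivial⟩

variable {a l}

theorem insertNth_mem_zeroDensity_of_endpoint {j : Fin (n + 1)} {c : ℝ} (hl : 0 < l)
    (hc : c = a j ∨ c = a j + l) {z : Fin n → ℝ} (hzc : j.insertNth c z ∈ zeroDensity volume F)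
    (hz : z ∈ univ.pi fun i => Ioo (a (j.succAbove i)) (a (j.succAbove i) + l))
    (hzM : z ∉ exceptionalLines F a l j) (t : ℝ) (ht : t ∈ Ioo (a j) (a j + l)) :
    j.insertNth t z ∈ zeroDensity volume F := by
  refine (lineDichotomy_exceptionalLines a l j z hz hzM).resolve_right (fun hfull => ?_) t ht
  rw [exceptionalLines, mem_union, not_or, mem_ofPred_eq, not_not] at hzM
  rcases hc with rfl | rfl
  · refine hzM.2.1 _ hzc (a j + l) (by simpa using hl.ne') ?_
    rwa [uIoo_of_lt (by simpa using hl)]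
  · refine hzM.2.1 _ hzc (a j) (by simpa using hl.ne') ?_
    rwa [uIoo_of_gt (by simpa using hl)]

theorem cubeProb_setOf_insertNth_mem_mul_rpow_le (hF : MeasurableSet F) (hl : 0 < l)
    (hF0 : cubeProb a l F ≠ 0) {j : Fin (n + 1)} {c : ℝ} (hc : c = a j ∨ c = a j + l) :
    cubeProb (j.removeNth a) l {z | j.insertNth c z ∈ zeroDensity volume F} *
      cubeProb a l F ^ ((n : ℝ) / (n + 1)) ≤
    (2 * n + 4) * ∑ i, cubeProb (i.removeNth a) l (exceptionalLines F a l i) := by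
  have hprob := fun i => isProbabilityMeasure_cond_Ioo (a i) hl
  have hzero : cubeProb a l (zeroDensity volume F) = cubeProb a l Fᶜ := by
    have hae := zeroDensity_compl_ae_eq volume hF.compl
    rw [compl_compl] at hae
    exact measure_congr ((cubeProb_absolutelyContinuous a).ae_le hae)
  have hone : cubeProb a l (zeroDensity volume Fᶜ) = cubeProb a l F :=
    measure_congr ((cubeProb_absolutelyContinuous a).ae_le (zeroDensity_compl_ae_eq volume hF))
  rw [← hone] at hF0 ⊢
  refine (lineDichotomy_exceptionalLines a l).measure_mul_rpow_le (disjoint_zeroDensity_compl F)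
    (fun i => ProbabilityTheory.ae_cond_mem measurableSet_Ioo) ?_ hF0
    fun z hzc hz hzM => insertNth_mem_zeroDensity_of_endpoint hl hc hzc hz hzM
  change 1 ≤ cubeProb a l _ + cubeProb a l _
  rw [hzero, hone, add_comm]
  have : IsProbabilityMeasure (cubeProb a l) := by unfold cubeProb; infer_instance
  exact (prob_add_prob_compl hF).ge

theorem volume_setOf_insertNth_mem_mul_rpow_le (hF : MeasurableSet F) (hl : 0 < l)
    (hF0 : cubeProb a l F ≠ 0) {j : Fin (n + 1)} {c : ℝ} (hc : c = a j ∨ c = a j + l) :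
    volume ({z | j.insertNth c z ∈ zeroDensity volume F} ∩ closedCube (j.removeNth a) l) *
      cubeProb a l F ^ ((n : ℝ) / (n + 1)) ≤
    (2 * n + 4) * ∑ i : Fin (n + 1), volume
      (i.removeNth '' (openCube a l \ (zeroDensity volume F ∪ zeroDensity volume Fᶜ))) := by
  have hl0 : (ENNReal.ofReal l ^ n)⁻¹ ≠ 0 := by simp
  have hltop : (ENNReal.ofReal l ^ n)⁻¹ ≠ ∞ :=
    ENNReal.inv_ne_top.2 (pow_ne_zero _ (by simpa using hl))
  rw [← ENNReal.mul_le_mul_iff_right hl0 hltop, ← mul_assoc, ← cubeProb_apply]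
  refine (cubeProb_setOf_insertNth_mem_mul_rpow_le hF hl hF0 hc).trans ?_
  rw [mul_left_comm, Finset.mul_sum _ _ (_⁻¹)]
  gcongr with i
  rw [cubeProb_apply]
  exact mul_le_mul_right
    ((measure_mono inter_subset_left).trans (volume_exceptionalLines_le a l hF i)) _

end Cubes

section Faces

theorem interior_closedCube {m : ℕ} (a : Fin m → ℝ) (l : ℝ) :
    interior (closedCube a l) = openCube a l := by
  simp only [closedCube, openCube, interior_pi_set finite_univ, interior_Icc]

theorem isClosed_closedCube {m : ℕ} (a : Fin m → ℝ) (l : ℝ) : IsClosed (closedCube a l) :=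
  isClosed_set_pi fun _ _ => isClosed_Icc

theorem exists_eq_or_eq_of_mem_frontier_closedCube {m : ℕ} {a x : Fin m → ℝ} {l : ℝ}
    (hx : x ∈ frontier (closedCube a l)) : ∃ j, x j = a j ∨ x j = a j + l := by
  rw [(isClosed_closedCube a l).frontier_eq, interior_closedCube] at hx
  by_contra! h
  exact hx.2 fun i hi => ⟨(hx.1 i hi).1.lt_of_ne (h i).1.symm, (hx.1 i hi).2.lt_of_ne (h i).2⟩

variable {n : ℕ}

theorem hausdorffMeasure_image_insertNth (j : Fin (n + 1)) (c : ℝ) (Z : Set (Fin n → ℝ)) :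
    μH[(n : ℝ)] ((fun z => (j.insertNth c z : Fin (n + 1) → ℝ)) '' Z) = volume Z := by
  have hiso : Isometry fun z : Fin n → ℝ => (j.insertNth c z : Fin (n + 1) → ℝ) :=
    Isometry.of_dist_eq fun y z => by simp
  rw [hiso.hausdorffMeasure_image (.inl n.cast_nonneg), ← hausdorffMeasure_pi_real,
    Fintype.card_fin]

theorem volume_image_removeNth_le (j : Fin (n + 1)) (S : Set (Fin (n + 1) → ℝ)) :
    volume (j.removeNth '' S : Set (Fin n → ℝ)) ≤ μH[(n : ℝ)] S := by
  have hlip : LipschitzWith 1 (j.removeNth : (Fin (n + 1) → ℝ) → Fin n → ℝ) :=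
    LipschitzWith.of_dist_le_mul fun x y => by
      rw [NNReal.coe_one, one_mul, dist_pi_le_iff dist_nonneg]
      exact fun i => dist_le_pi_dist x y (j.succAbove i)
  simpa [← hausdorffMeasure_pi_real] using hlip.hausdorffMeasure_image_le n.cast_nonneg S

theorem hausdorffMeasure_frontier_closedCube_inter_le (a : Fin (n + 1) → ℝ) (l : ℝ)
    (W : Set (Fin (n + 1) → ℝ)) : μH[(n : ℝ)] (frontier (closedCube a l) ∩ W) ≤
      ∑ j : Fin (n + 1), (volume ({z | j.insertNth (a j) z ∈ W} ∩ closedCube (j.removeNth a) l) +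
        volume ({z | j.insertNth (a j + l) z ∈ W} ∩ closedCube (j.removeNth a) l)) := by
  let face (j : Fin (n + 1)) (c : ℝ) : Set (Fin (n + 1) → ℝ) :=
    (fun z => j.insertNth c z) '' ({z | j.insertNth c z ∈ W} ∩ closedCube (j.removeNth a) l)
  have hcover : frontier (closedCube a l) ∩ W ⊆ ⋃ j, face j (a j) ∪ face j (a j + l) := by
    rintro x ⟨hx, hxW⟩
    obtain ⟨j, hj⟩ := exists_eq_or_eq_of_mem_frontier_closedCube hx
    have hxcube := (isClosed_closedCube a l).frontier_subset hx
    have hface : x ∈ face j (x j) :=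
      ⟨j.removeNth x, ⟨by simpa using hxW, fun i _ => hxcube _ trivial⟩, by simp⟩
    refine mem_iUnion.2 ⟨j, ?_⟩
    rcases hj with hj | hj
    · exact .inl (hj ▸ hface)
    · exact .inr (hj ▸ hface)
  calc μH[(n : ℝ)] (frontier (closedCube a l) ∩ W)
      ≤ ∑ j, μH[(n : ℝ)] (face j (a j) ∪ face j (a j + l)) :=
        (measure_mono hcover).trans (measure_iUnion_fintype_le _ _)
    _ ≤ _ := Finset.sum_le_sum fun j _ => (measure_union_le _ _).trans <| add_le_add
        (hausdorffMeasure_image_insertNth j _ _).le (hausdorffMeasure_image_insertNth j _ _).le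

theorem hausdorffMeasure_frontier_inter_zeroDensity_mul_rpow_le {F : Set (Fin (n + 1) → ℝ)}
    (hF : MeasurableSet F) {a : Fin (n + 1) → ℝ} {l : ℝ} (hl : 0 < l) (hF0 : cubeProb a l F ≠ 0) :
    μH[(n : ℝ)] (frontier (closedCube a l) ∩ zeroDensity volume F) *
      cubeProb a l F ^ ((n : ℝ) / (n + 1)) ≤
    (n + 1) * (2 * ((2 * n + 4) * (n + 1))) * μH[(n : ℝ)]
      (interior (closedCube a l) \ (zeroDensity volume F ∪ zeroDensity volume Fᶜ)) := by
  rw [interior_closedCube]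
  set S := openCube a l \ (zeroDensity volume F ∪ zeroDensity volume Fᶜ)
  have hface : ∀ (j : Fin (n + 1)) (c : ℝ), c = a j ∨ c = a j + l →
      volume ({z | j.insertNth c z ∈ zeroDensity volume F} ∩ closedCube (j.removeNth a) l) *
        cubeProb a l F ^ ((n : ℝ) / (n + 1)) ≤ (2 * n + 4) * ((n + 1) * μH[(n : ℝ)] S) := by
    intro j c hc
    calc _ ≤ (2 * n + 4) * ∑ i : Fin (n + 1), volume (i.removeNth '' S : Set (Fin n → ℝ)) :=
          volume_setOf_insertNth_mem_mul_rpow_le hF hl hF0 hc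
      _ ≤ (2 * n + 4) * ∑ _i : Fin (n + 1), μH[(n : ℝ)] S := by
          gcongr with i
          exact volume_image_removeNth_le i S
      _ = _ := by simp
  calc _ ≤ _ := mul_le_mul_left (hausdorffMeasure_frontier_closedCube_inter_le a l _) _
    _ ≤ ∑ _j : Fin (n + 1), ((2 * n + 4) * ((n + 1) * μH[(n : ℝ)] S) +
          (2 * n + 4) * ((n + 1) * μH[(n : ℝ)] S)) := by
        rw [Finset.sum_mul]
        refine Finset.sum_le_sum fun j _ => ?_
        rw [add_mul]
        exact add_le_add (hface j _ (.inl rfl)) (hface j _ (.inr rfl))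
    _ = _ := by simp; ring

end Faces

section Euclidean

variable {d : ℕ} {E : Set (Ed d)} {x : Ed d}

theorem volume_preimage_toLp (A : Set (Ed d)) :
    volume (WithLp.toLp 2 ⁻¹' A : Set (Fin d → ℝ)) = volume A :=
  MeasurePreserving.measure_preimage_equiv (f := MeasurableEquiv.toLp 2 (Fin d → ℝ))
    (PiLp.volume_preserving_toLp (Fin d)) A

theorem volume_preimage_toLp_inter_div_le {K : NNReal}
    (hK : LipschitzWith K (WithLp.toLp 2 : (Fin d → ℝ) → Ed d)) {r : ℝ} (hr : 0 < r) :
    volume (WithLp.toLp 2 ⁻¹' E ∩ closedBall x.ofLp r) / volume (closedBall x.ofLp r) ≤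
      ENNReal.ofReal ((K + 1) ^ d) *
        (volume (ball x ((K + 1) * r) ∩ E) / ENNReal.ofReal (((K + 1) * r) ^ d)) := by
  have hK0 : (0 : ℝ) < K + 1 := by positivity
  have hsub : WithLp.toLp 2 ⁻¹' E ∩ closedBall x.ofLp r ⊆
      WithLp.toLp 2 ⁻¹' (ball x ((K + 1) * r) ∩ E) := fun y hy => by
    refine ⟨mem_ball.2 ?_, hy.1⟩
    calc dist (WithLp.toLp 2 y) x ≤ K * dist y x.ofLp := hK.dist_le_mul y x.ofLp
      _ ≤ K * r := by gcongr; exact mem_closedBall.1 hy.2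
      _ < (K + 1) * r := by linarith
  calc volume (WithLp.toLp 2 ⁻¹' E ∩ closedBall x.ofLp r) / volume (closedBall x.ofLp r)
      ≤ volume (ball x ((K + 1) * r) ∩ E) / ENNReal.ofReal (r ^ d) := by
        rw [Real.volume_pi_closedBall _ hr.le, Fintype.card_fin]
        gcongr
        · exact (measure_mono hsub).trans_eq (volume_preimage_toLp _)
        · linarith
    _ = _ := by
        rw [mul_pow, ENNReal.ofReal_mul (by positivity), ← mul_div_assoc,
          ENNReal.mul_div_mul_left _ _ (by simpa using pow_pos hK0 d) ENNReal.ofReal_ne_top]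

theorem mem_zeroDensity_of_not_limsup_pos
    (h : ¬ 0 < limsup (fun r : ℝ => volume (ball x r ∩ E) / ENNReal.ofReal (r ^ d)) (𝓝[>] 0)) :
    x.ofLp ∈ zeroDensity volume (WithLp.toLp 2 ⁻¹' E) := by
  obtain ⟨K, hK⟩ : ∃ K, LipschitzWith K (WithLp.toLp 2 : (Fin d → ℝ) → Ed d) :=
    ⟨_, PiLp.lipschitzWith_toLp 2 _⟩
  have hscale : Tendsto (fun r : ℝ => (K + 1) * r) (𝓝[>] 0) (𝓝[>] 0) :=
    tendsto_nhdsWithin_iff.2 ⟨((continuous_const_mul ((K : ℝ) + 1)).tendsto' 0 0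
      (mul_zero _)).mono_left nhdsWithin_le_nhds,
      eventually_mem_nhdsWithin.mono fun r hr => mul_pos (by positivity : (0 : ℝ) < K + 1) hr⟩
  have hlim := tendsto_of_le_liminf_of_limsup_le bot_le (not_lt.1 h)
  have hbound := ENNReal.Tendsto.const_mul (a := ENNReal.ofReal ((K + 1) ^ d))
    (hlim.comp hscale) (.inr ENNReal.ofReal_ne_top)
  rw [bot_eq_zero, mul_zero] at hbound
  refine tendsto_of_tendsto_of_tendsto_of_le_of_le' tendsto_const_nhds hbound
    (.of_forall fun _ => zero_le) ?_
  filter_upwards [self_mem_nhdsWithin] with r hr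
  exact volume_preimage_toLp_inter_div_le hK hr

theorem mem_zeroDensity_of_notMem_mtClosure (h : x ∉ mtClosure E) :
    x.ofLp ∈ zeroDensity volume (WithLp.toLp 2 ⁻¹' E) :=
  mem_zeroDensity_of_not_limsup_pos h

theorem mem_zeroDensity_union_of_notMem_mtBoundary (h : x ∉ mtBoundary E) :
    x.ofLp ∈ zeroDensity volume (WithLp.toLp 2 ⁻¹' E) ∪
      zeroDensity volume (WithLp.toLp 2 ⁻¹' E)ᶜ := by
  rcases not_and_or.1 h with hcompl | hE
  · exact Or.inr (mem_zeroDensity_of_not_limsup_pos (E := Eᶜ) hcompl)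
  · exact Or.inl (mem_zeroDensity_of_not_limsup_pos hE)

theorem IsCube.exists_eq_preimage {Q : Set (Ed d)} (hQ : IsCube Q) :
    ∃ (a : Fin d → ℝ) (l : ℝ), 0 < l ∧ Q = WithLp.ofLp ⁻¹' closedCube a l := by
  obtain ⟨a, l, hl, rfl⟩ := hQ
  exact ⟨a.ofLp, l, hl, by ext x; simp only [closedCube, mem_ofPred_eq, mem_preimage, mem_univ_pi]⟩

theorem frontier_preimage_ofLp_sdiff_mtClosure_subset (S : Set (Fin d → ℝ)) :
    frontier (WithLp.ofLp ⁻¹' S) \ mtClosure E ⊆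
      WithLp.ofLp ⁻¹' (frontier S ∩ zeroDensity volume (WithLp.toLp 2 ⁻¹' E)) := fun _ hx =>
  ⟨((PiLp.homeomorph 2 fun _ => ℝ).preimage_frontier S).ge hx.1,
    mem_zeroDensity_of_notMem_mtClosure hx.2⟩

theorem interior_sdiff_zeroDensity_subset_image_ofLp (S : Set (Fin d → ℝ)) :
    interior S \ (zeroDensity volume (WithLp.toLp 2 ⁻¹' E) ∪
        zeroDensity volume (WithLp.toLp 2 ⁻¹' E)ᶜ) ⊆
      WithLp.ofLp '' (mtBoundary E ∩ interior (WithLp.ofLp ⁻¹' S)) := fun x hx =>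
  ⟨WithLp.toLp 2 x, ⟨not_imp_comm.1 mem_zeroDensity_union_of_notMem_mtBoundary hx.2,
    ((PiLp.homeomorph 2 fun _ => ℝ).preimage_interior S).le hx.1⟩, rfl⟩

theorem exists_hausdorffMeasure_frontier_sdiff_mtClosure_mul_rpow_le (n : ℕ) :
    ∃ C : ℝ≥0∞, C ≠ ∞ ∧ ∀ (E Q : Set (Ed (n + 1))) (q : ℝ≥0∞), MeasurableSet E → IsCube Q →
      q ≠ 0 → volume (E ∩ Q) = q * volume Q →
      μH[(n : ℝ)] (frontier Q \ mtClosure E) * q ^ ((n : ℝ) / (n + 1)) ≤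
        C * μH[(n : ℝ)] (mtBoundary E ∩ interior Q) := by
  have hlip := PiLp.lipschitzWith_ofLp 2 fun _ : Fin (n + 1) => ℝ
  have hanti := PiLp.antilipschitzWith_ofLp 2 fun _ : Fin (n + 1) => ℝ
  set K : NNReal := (Fintype.card (Fin (n + 1)) : NNReal) ^ (1 / (2 : ℝ≥0∞)).toReal
  set c : ℝ≥0∞ := (n + 1) * (2 * ((2 * n + 4) * (n + 1)))
  refine ⟨(K : ℝ≥0∞) ^ (n : ℝ) * c, by finiteness, ?_⟩
  intro E Q q hE hQ hq hvol
  obtain ⟨a, l, hl, rfl⟩ := hQ.exists_eq_preimage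
  set F : Set (Fin (n + 1) → ℝ) := WithLp.toLp 2 ⁻¹' E
  have hF : MeasurableSet F := (PiLp.continuous_toLp 2 _).measurable hE
  have hprob : cubeProb a l F = q := by
    refine cubeProb_of_volume_inter_closedCube a hl ?_
    rwa [← volume_preimage_toLp, ← volume_preimage_toLp (WithLp.ofLp ⁻¹' _)] at hvol
  have hpi := hausdorffMeasure_frontier_inter_zeroDensity_mul_rpow_le hF hl (hprob ▸ hq)
  rw [hprob] at hpi
  have hfrontier : μH[(n : ℝ)] (frontier (WithLp.ofLp ⁻¹' closedCube a l) \ mtClosure E) ≤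
      (K : ℝ≥0∞) ^ (n : ℝ) * μH[(n : ℝ)] (frontier (closedCube a l) ∩ zeroDensity volume F) :=
    (measure_mono (frontier_preimage_ofLp_sdiff_mtClosure_subset _)).trans
      (hanti.hausdorffMeasure_preimage_le n.cast_nonneg _)
  have hboundary : μH[(n : ℝ)]
      (interior (closedCube a l) \ (zeroDensity volume F ∪ zeroDensity volume Fᶜ)) ≤
        μH[(n : ℝ)] (mtBoundary E ∩ interior (WithLp.ofLp ⁻¹' closedCube a l)) :=
    (measure_mono (interior_sdiff_zeroDensity_subset_image_ofLp _)).trans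
      (by simpa using hlip.hausdorffMeasure_image_le n.cast_nonneg _)
  calc μH[(n : ℝ)] (frontier (WithLp.ofLp ⁻¹' closedCube a l) \ mtClosure E) *
        q ^ ((n : ℝ) / (n + 1))
    _ ≤ (K : ℝ≥0∞) ^ (n : ℝ) * μH[(n : ℝ)]
          (frontier (closedCube a l) ∩ zeroDensity volume F) * q ^ ((n : ℝ) / (n + 1)) := by
        gcongr
    _ ≤ (K : ℝ≥0∞) ^ (n : ℝ) * (c * μH[(n : ℝ)]
          (interior (closedCube a l) \ (zeroDensity volume F ∪ zeroDensity volume Fᶜ))) := by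
        rw [mul_assoc]
        exact mul_le_mul_right hpi _
    _ ≤ (K : ℝ≥0∞) ^ (n : ℝ) * (c * μH[(n : ℝ)]
          (mtBoundary E ∩ interior (WithLp.ofLp ⁻¹' closedCube a l))) := by
        gcongr
    _ = (K : ℝ≥0∞) ^ (n : ℝ) * c * μH[(n : ℝ)]
          (mtBoundary E ∩ interior (WithLp.ofLp ⁻¹' closedCube a l)) := (mul_assoc _ _ _).symm

end Euclidean

/-- If `E` is measurable and `Q` is a cube with `|E ∩ Q| = λ |Q|`, `0 < λ ≤ 1`, then
`σ(∂Q \ cl* E) ≤ C_d · λ^{-(d-1)/d} · σ(∂*E ∩ interior Q)` where `σ = μH^{d-1}`. -/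
theorem boundary_not_in_closure_bound (d : ℕ) (hd : 1 ≤ d) :
    ∃ C : ℝ≥0∞, C ≠ ∞ ∧
      ∀ (E Q : Set (Ed d)), MeasurableSet E → IsCube Q →
        ∀ lam : ℝ, 0 < lam → lam ≤ 1 →
          volume (E ∩ Q) = ENNReal.ofReal lam * volume Q →
          μH[(d:ℝ) - 1] (frontier Q \ mtClosure E) ≤
            C * ENNReal.ofReal (lam ^ (-((d:ℝ) - 1) / d)) *
              μH[(d:ℝ) - 1] (mtBoundary E ∩ interior Q) := by
  obtain ⟨n, rfl⟩ : ∃ n, d = n + 1 := ⟨d - 1, by omega⟩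
  obtain ⟨C, hC, h⟩ := exists_hausdorffMeasure_frontier_sdiff_mtClosure_mul_rpow_le n
  refine ⟨C, hC, fun E Q hE hQ lam hlam _ hvol => ?_⟩
  have key := h E Q (ENNReal.ofReal lam) hE hQ (by simpa using hlam) hvol
  have hpred : ((n + 1 : ℕ) : ℝ) - 1 = n := by push_cast; ring
  have hexp : -(n : ℝ) / (n + 1 : ℕ) = -((n : ℝ) / (n + 1)) := by push_cast; ring
  rw [hpred, hexp, ← ENNReal.ofReal_rpow_of_pos hlam, mul_right_comm, ENNReal.rpow_neg,
    ← div_eq_mul_inv]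
  exact (ENNReal.le_div_iff_mul_le (Or.inl (by simp [hlam])) (Or.inl (by simp [hlam.not_ge]))).2 key

end
end

section
/- Let d ≥ 1 and let 𝒬 be a finite set of dyadic cubes in ℝ^d. Let Ω ⊆ ℝ^d be open with ⋃_{Q∈𝒬} interior(Q) ⊆ Ω and let f ∈ L¹(Ω). For each λ ∈ ℝ let 𝒬_λ be the set of maximal cubes (with respect to inclusion) of { Q ∈ 𝒬 : f_Q > λ }. Then there is a constant C depending only on d such that Σ_{Q∈𝒬} ∫_ℝ 1{ Q ∈ 𝒬_λ and |Q ∩ {f > λ}| ≥ 2^{-d-2}|Q| } · σ(∂Q \ cl*{f > λ}) dλ ≤ C · var_{⋃_{Q∈𝒬} interior(Q)} f, where ∂Q denotes the topological boundary of Q. -/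
open MeasureTheory Metric Set Filter
open scoped ENNReal Topology

noncomputable section

/-- A dyadic cube `∏_i [2^n m_i, 2^n (m_i + 1))`. -/
def IsDyadicCube {d : ℕ} (Q : Set (Ed d)) : Prop :=
  ∃ (n : ℤ) (m : Fin d → ℤ),
    Q = {x : Ed d | ∀ i, x i ∈ Set.Ico ((2:ℝ)^n * m i) ((2:ℝ)^n * (m i + 1))}

/-- Divergence of a vector field `φ : ℝ^d → ℝ^d`. -/
def divergence {d : ℕ} (φ : Ed d → Ed d) (x : Ed d) : ℝ :=
  ∑ i, fderiv ℝ φ x (EuclideanSpace.single i 1) i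

/-- The variation of `f` in `Ω`. -/
def var {d : ℕ} (Ω : Set (Ed d)) (f : Ed d → ℝ) : ℝ≥0∞ :=
  ⨆ φ ∈ {φ : Ed d → Ed d | ContDiff ℝ 1 φ ∧ HasCompactSupport φ ∧ tsupport φ ⊆ Ω ∧
      ∀ x, ‖φ x‖ ≤ 1},
    ENNReal.ofReal (∫ x in Ω, f x * divergence φ x)

/-- `Q` is a maximal cube (w.r.t. inclusion) of `{Q ∈ 𝒬 : ⨍_Q f > λ}`. -/
def IsMaximalCube {d : ℕ} (𝒬 : Finset (Set (Ed d))) (f : Ed d → ℝ) (lam : ℝ)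
    (Q : Set (Ed d)) : Prop :=
  Q ∈ 𝒬 ∧ lam < ⨍ z in Q, f z ∧
    ∀ P ∈ 𝒬, lam < (⨍ z in P, f z) → Q ⊆ P → P = Q

/-!
The perimeter of `E` in a convex open set `A` can be measured by the volumes of the points of `A`
which a coordinate translation by `2⁻¹ ^ m` moves, inside `A`, across the boundary of `E`, divided
by `2⁻¹ ^ m`. These quotients increase with `m`, because a segment whose endpoints are separated by
`E` has a half with the same property.

Outside the measure-theoretic closure of `E`, a thin slab over a face of a cube contains little of
`E`. If the slab is translated step by step across the cube, a point of it outside `E` either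
crosses into `E` or sweeps out a line of points outside `E`. So the area of this part of the face
is at most the perimeter of `E` plus the volume of the complement of `E` in the cube, divided by the
side length. When `E` fills a fixed proportion of the cube, that volume is controlled by the
perimeter too: this is the relative isoperimetric inequality, which follows by averaging over all
translations the volume of the points they move across the boundary of `E`.

The maximal cubes at a level are pairwise disjoint, so by Fubini the perimeters of `{f > λ}` in
them, integrated over `λ`, are controlled by integrals of `|f (x + v) - f x|`. Against a test
function `ψ` the difference `f (x + v) - f x` becomes the directional derivative of the average of
`ψ` over a segment parallel to `v`, and hence is bounded by `‖v‖` times the variation of `f`.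
-/

/-! ### Crossings of a set along a translation -/

/-- The points `x` of `A` such that `x + v` is in `A` and `E` separates `x` from `x + v`. Its
measure is the discrete variation in `A`, in the direction `v`, of the indicator of `E`. -/
def crossingSet {G : Type*} [Add G] (A E : Set G) (v : G) : Set G :=
  {x | x ∈ A ∧ x + v ∈ A ∧ ¬(x ∈ E ↔ x + v ∈ E)}

section Crossings

variable {G : Type*} [AddGroup G] {A E S T : Set G}

lemma mem_crossingSet {x v : G} :
    x ∈ crossingSet A E v ↔ x ∈ A ∧ x + v ∈ A ∧ ¬(x ∈ E ↔ x + v ∈ E) :=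
  Iff.rfl

lemma crossingSet_zero : crossingSet A E 0 = ∅ := by
  simp [crossingSet]

lemma crossingSet_inter_self (v : G) : crossingSet A (A ∩ E) v = crossingSet A E v := by
  ext x
  simp only [mem_crossingSet, mem_inter_iff]
  tauto

lemma exists_add_nsmul_mem_crossingSet {x v : G} {k : ℕ} (hA : ∀ l ≤ k, x + l • v ∈ A)
    (hx : x ∉ E) (hk : x + k • v ∈ E) : ∃ l < k, x + l • v ∈ crossingSet A E v := by
  induction k with
  | zero => exact absurd (by simpa using hk) hx
  | succ k ih =>
    by_cases hkE : x + k • v ∈ E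
    · obtain ⟨l, hl, hmem⟩ := ih (fun l hl => hA l (by omega)) hkE
      exact ⟨l, by omega, hmem⟩
    · have hstep : x + k • v + v = x + (k + 1) • v := by rw [succ_nsmul, add_assoc]
      refine ⟨k, k.lt_succ_self, hA k k.le_succ, ?_, ?_⟩
      · exact hstep ▸ hA (k + 1) le_rfl
      · rw [hstep]
        exact fun h => hkE (h.2 hk)

variable [MeasurableSpace G] [MeasurableAdd G]

lemma measurableSet_crossingSet (hA : MeasurableSet A) (hE : MeasurableSet E) (v : G) :
    MeasurableSet (crossingSet A E v) := by
  have hv : Measurable fun x : G => x + v := measurable_add_const v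
  have heq : crossingSet A E v =
      A ∩ ((fun x => x + v) ⁻¹' A ∩ symmDiff E ((fun x => x + v) ⁻¹' E)) := by
    ext x
    simp only [mem_crossingSet, mem_inter_iff, mem_preimage, mem_symmDiff]
    tauto
  rw [heq]
  exact hA.inter ((hv hA).inter (hE.symmDiff (hv hE)))

variable {μ : Measure G} [μ.IsAddRightInvariant]

lemma measure_crossingSet_neg (v : G) :
    μ (crossingSet A E (-v)) = μ (crossingSet A E v) := by
  rw [← measure_preimage_add_right μ v (crossingSet A E (-v))]
  congr 1
  ext x
  simp only [mem_preimage, mem_crossingSet, add_neg_cancel_right]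
  tauto

lemma measure_crossingSet_add_le {v w : G} (h : ∀ x ∈ A, x + (v + w) ∈ A → x + v ∈ A) :
    μ (crossingSet A E (v + w)) ≤ μ (crossingSet A E v) + μ (crossingSet A E w) := by
  have hsub : crossingSet A E (v + w) ⊆
      crossingSet A E v ∪ (fun x => x + v) ⁻¹' crossingSet A E w := by
    rintro x ⟨hx, hxvw, hsep⟩
    have hxv := h x hx hxvw
    rw [← add_assoc] at hxvw hsep
    simp only [mem_union, mem_preimage, mem_crossingSet]
    tauto
  calc μ (crossingSet A E (v + w))
      ≤ μ (crossingSet A E v) + μ ((fun x => x + v) ⁻¹' crossingSet A E w) :=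
        (measure_mono hsub).trans (measure_union_le _ _)
    _ = μ (crossingSet A E v) + μ (crossingSet A E w) := by rw [measure_preimage_add_right]

lemma sum_measure_inter_preimage_add_le {ι : Type*} {I : Finset ι} {u : ι → G}
    (hT : MeasurableSet T) (hS : MeasurableSet S)
    (hdisj : (I : Set ι).PairwiseDisjoint fun i => (fun x => x + u i) '' T) :
    ∑ i ∈ I, μ (T ∩ (fun x => x + u i) ⁻¹' S) ≤ μ S := by
  have hpre : ∀ i, (fun x => x + u i) '' T = (fun x => x + -u i) ⁻¹' T :=
    fun i => image_add_right
  have hmeas : ∀ i, MeasurableSet ((fun x => x + u i) '' T) :=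
    fun i => hpre i ▸ measurable_add_const (-u i) hT
  have hvol : ∀ i, μ (T ∩ (fun x => x + u i) ⁻¹' S) = μ ((fun x => x + u i) '' T ∩ S) := by
    intro i
    rw [← measure_preimage_add_right μ (u i) (_ ∩ S), preimage_inter, hpre]
    congr 2
    ext x
    simp
  simp only [hvol]
  rw [← measure_biUnion_finset (hdisj.mono fun i => inter_subset_left)
    fun i _ => (hmeas i).inter hS]
  exact measure_mono (iUnion₂_subset fun _ _ => inter_subset_right)

/-- A point outside `E` either has all its translates by multiples of `v` outside `E`, or crosses
`E` on the way; disjointness of the translates keeps the crossings from being counted twice. -/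
lemma mul_measure_diff_le_of_pairwiseDisjoint_translates (hA : MeasurableSet A)
    (hE : MeasurableSet E) (hT : MeasurableSet T) {v : G} {N : ℕ}
    (hTA : ∀ k < N, ∀ x ∈ T, x + k • v ∈ A)
    (hdisj : (Finset.range N : Set ℕ).PairwiseDisjoint fun k => (fun x => x + k • v) '' T) :
    N * μ (T \ E) ≤ N * μ (crossingSet A E v) + μ (A \ E) := by
  have hk : ∀ k ∈ Finset.range N, μ (T \ E) ≤
      μ (crossingSet A E v) + μ (T ∩ (fun x => x + k • v) ⁻¹' (A \ E)) := by
    intro k hk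
    have hkN : k < N := Finset.mem_range.1 hk
    have hsub : T \ E ⊆
        (⋃ l ∈ Finset.range k, T ∩ (fun x => x + l • v) ⁻¹' crossingSet A E v) ∪
          T ∩ (fun x => x + k • v) ⁻¹' (A \ E) := by
      rintro x ⟨hxT, hxE⟩
      by_cases hxk : x + k • v ∈ E
      · obtain ⟨l, hl, hmem⟩ := exists_add_nsmul_mem_crossingSet
          (fun l hl => hTA l (hl.trans_lt hkN) x hxT) hxE hxk
        exact Or.inl (mem_biUnion (Finset.mem_coe.2 (Finset.mem_range.2 hl)) ⟨hxT, hmem⟩)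
      · exact Or.inr ⟨hxT, hTA k hkN x hxT, hxk⟩
    refine ((measure_mono hsub).trans (measure_union_le _ _)).trans (add_le_add_left ?_ _)
    exact (measure_biUnion_finset_le _ _).trans <| sum_measure_inter_preimage_add_le hT
      (measurableSet_crossingSet hA hE v)
      (hdisj.subset (Finset.coe_subset.2 (Finset.range_subset_range.2 hkN.le)))
  calc N * μ (T \ E) = ∑ _k ∈ Finset.range N, μ (T \ E) := by simp
    _ ≤ ∑ k ∈ Finset.range N,
          (μ (crossingSet A E v) + μ (T ∩ (fun x => x + k • v) ⁻¹' (A \ E))) :=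
        Finset.sum_le_sum hk
    _ ≤ N * μ (crossingSet A E v) + μ (A \ E) := by
        rw [Finset.sum_add_distrib]
        simp only [Finset.sum_const, Finset.card_range, nsmul_eq_mul]
        gcongr
        exact sum_measure_inter_preimage_add_le hT (hA.diff hE) hdisj

end Crossings

section ConvexCrossings

variable {V : Type*} [AddCommGroup V] [Module ℝ V] [MeasurableSpace V] [MeasurableAdd V]
  {μ : Measure V} [μ.IsAddRightInvariant] {A E : Set V}

lemma measure_crossingSet_nsmul_le (hA : Convex ℝ A) (v : V) (k : ℕ) :
    μ (crossingSet A E (k • v)) ≤ k * μ (crossingSet A E v) := by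
  induction k with
  | zero => simp [crossingSet_zero]
  | succ k ih =>
    have hmid : ∀ x ∈ A, x + (k • v + v) ∈ A → x + k • v ∈ A := by
      intro x hx hxv
      have hseg := hA.add_smul_mem hx hxv (t := (k : ℝ) / (k + 1))
        ⟨by positivity, by rw [div_le_one (by positivity)]; linarith⟩
      rwa [← succ_nsmul, ← Nat.cast_smul_eq_nsmul ℝ (k + 1), smul_smul, Nat.cast_succ,
        div_mul_cancel₀ _ (by positivity), Nat.cast_smul_eq_nsmul] at hseg
    calc μ (crossingSet A E ((k + 1) • v))
        ≤ μ (crossingSet A E (k • v)) + μ (crossingSet A E v) := by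
          rw [succ_nsmul]; exact measure_crossingSet_add_le hmid
      _ ≤ k * μ (crossingSet A E v) + μ (crossingSet A E v) := by gcongr
      _ = (k + 1 : ℕ) * μ (crossingSet A E v) := by rw [Nat.cast_succ, add_one_mul]

lemma measure_crossingSet_zsmul_le (hA : Convex ℝ A) (v : V) (k : ℤ) :
    μ (crossingSet A E (k • v)) ≤ k.natAbs * μ (crossingSet A E v) := by
  obtain ⟨m, rfl | rfl⟩ := k.eq_nat_or_neg
  · simpa using measure_crossingSet_nsmul_le hA v m
  · simpa [measure_crossingSet_neg] using measure_crossingSet_nsmul_le hA v m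

end ConvexCrossings

section Isoperimetric

variable {G : Type*} [AddGroup G] [MeasurableSpace G] {μ : Measure G} {A E S T : Set G}

lemma lintegral_measure_inter_preimage_add [MeasurableAdd₂ G] [SFinite μ] [μ.IsAddLeftInvariant]
    (hS : MeasurableSet S) (hT : MeasurableSet T) :
    ∫⁻ z, μ (S ∩ (fun x => x + z) ⁻¹' T) ∂μ = μ S * μ T := by
  have hmeas : MeasurableSet {p : G × G | p.2 ∈ S ∧ p.2 + p.1 ∈ T} :=
    (measurable_snd hS).inter ((measurable_snd.add measurable_fst) hT)
  have hslice : ∀ x, μ ((fun z => (z, x)) ⁻¹' {p : G × G | p.2 ∈ S ∧ p.2 + p.1 ∈ T}) =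
      S.indicator (fun _ => μ T) x := by
    intro x
    by_cases hx : x ∈ S
    · rw [indicator_of_mem hx, ← measure_preimage_add μ x T]
      congr 1
      ext z
      simp [hx]
    · simp [hx]
  calc ∫⁻ z, μ (S ∩ (fun x => x + z) ⁻¹' T) ∂μ
      = (μ.prod μ) {p : G × G | p.2 ∈ S ∧ p.2 + p.1 ∈ T} := (Measure.prod_apply hmeas).symm
    _ = ∫⁻ x, S.indicator (fun _ => μ T) x ∂μ := by
        simp only [Measure.prod_apply_symm hmeas, hslice]
    _ = μ S * μ T := by rw [lintegral_indicator_const hS, mul_comm]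

variable [TopologicalSpace G] [IsTopologicalAddGroup G] [BorelSpace G] [R1Space G]
  [μ.InnerRegularCompactLTTop] [IsLocallyFiniteMeasure μ] [μ.IsAddRightInvariant]

lemma continuous_measure_inter_preimage_add (hT : MeasurableSet T) (hTtop : μ T ≠ ∞) :
    Continuous fun z => μ (S ∩ (fun x => x + z) ⁻¹' T) := by
  refine continuous_iff_continuousAt.2 fun z => ?_
  let τ : G → C(G, G) := fun w => ⟨fun x => x + w, by fun_prop⟩
  have hτ : Continuous τ := ContinuousMap.continuous_of_continuous_uncurry _ (by
    simp only [Function.uncurry_def, τ]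
    exact continuous_snd.add continuous_fst)
  let δ : G → ℝ≥0∞ := fun w => μ (symmDiff (τ w ⁻¹' T) (τ z ⁻¹' T))
  have hδ : Tendsto δ (𝓝 z) (𝓝 0) := tendsto_measure_symmDiff_preimage_nhds_zero (hτ.tendsto z)
    (Eventually.of_forall fun w => measurePreserving_add_right μ w)
    (measurePreserving_add_right μ z) hT.nullMeasurableSet hTtop
  have hupper : ∀ w, μ (S ∩ τ w ⁻¹' T) ≤ μ (S ∩ τ z ⁻¹' T) + δ w := fun w =>
    (measure_mono fun x hx => (by
      by_cases hxz : x ∈ τ z ⁻¹' T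
      · exact Or.inl ⟨hx.1, hxz⟩
      · exact Or.inr (Or.inl ⟨hx.2, hxz⟩))).trans (measure_union_le _ _)
  have hlower : ∀ w, μ (S ∩ τ z ⁻¹' T) - δ w ≤ μ (S ∩ τ w ⁻¹' T) := fun w =>
    tsub_le_iff_right.2 <| (measure_mono fun x hx => (by
      by_cases hxw : x ∈ τ w ⁻¹' T
      · exact Or.inl ⟨hx.1, hxw⟩
      · exact Or.inr (Or.inr ⟨hx.2, hxw⟩))).trans (measure_union_le _ _)
  change Tendsto (fun w => μ (S ∩ τ w ⁻¹' T)) (𝓝 z) (𝓝 (μ (S ∩ τ z ⁻¹' T)))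
  refine tendsto_of_tendsto_of_tendsto_of_le_of_le ?_ ?_ hlower hupper
  · simpa using ENNReal.Tendsto.sub (tendsto_const_nhds (x := μ (S ∩ τ z ⁻¹' T))) hδ
      (Or.inr ENNReal.zero_ne_top)
  · simpa using (tendsto_const_nhds (x := μ (S ∩ τ z ⁻¹' T))).add hδ

/-- Average over `z` the measure of the points of `A ∩ E` that translation by `z` moves to
`A \ E`. -/
lemma measure_inter_mul_measure_diff_le [MeasurableAdd₂ G] [SFinite μ] [μ.IsAddLeftInvariant]
    {D Z : Set G} {c : ℝ≥0∞} (hA : MeasurableSet A) (hAtop : μ A ≠ ∞) (hE : MeasurableSet E)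
    (hD : IsOpen D) (hAD : ∀ x ∈ A, ∀ z, x + z ∈ A → z ∈ D) (hZ : Dense Z)
    (hc : ∀ z ∈ D ∩ Z, μ (crossingSet A E z) ≤ c) :
    μ (A ∩ E) * μ (A \ E) ≤ μ D * c := by
  let φ : G → ℝ≥0∞ := fun z => μ (A ∩ E ∩ (fun x => x + z) ⁻¹' (A \ E))
  have hφ_cont : Continuous φ := continuous_measure_inter_preimage_add (hA.diff hE)
    (measure_ne_top_of_subset sdiff_subset hAtop)
  have hφ_le : ∀ z ∈ D, φ z ≤ c := by
    refine (hZ.open_subset_closure_inter hD).trans <|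
      closure_minimal (fun z hz => ?_) (isClosed_le hφ_cont continuous_const)
    refine (measure_mono ?_).trans (hc z hz)
    rintro x ⟨⟨hxA, hxE⟩, hxzA, hxzE⟩
    exact ⟨hxA, hxzA, fun h => hxzE (h.1 hxE)⟩
  have hφ_zero : ∀ z ∉ D, φ z = 0 := by
    intro z hz
    have hempty : A ∩ E ∩ (fun x => x + z) ⁻¹' (A \ E) = ∅ :=
      eq_empty_of_forall_notMem fun x hx => hz (hAD x hx.1.1 z hx.2.1)
    simp only [φ, hempty, measure_empty]
  calc μ (A ∩ E) * μ (A \ E) = ∫⁻ z, φ z ∂μ :=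
        (lintegral_measure_inter_preimage_add (hA.inter hE) (hA.diff hE)).symm
    _ ≤ ∫⁻ z, D.indicator (fun _ => c) z ∂μ := lintegral_mono fun z => by
        by_cases hz : z ∈ D
        · simpa [hz] using hφ_le z hz
        · simp [hz, hφ_zero z hz]
    _ = μ D * c := by rw [lintegral_indicator_const hD.measurableSet, mul_comm]

end Isoperimetric

/-! ### Boxes and the dyadic perimeter -/

section CoordBox

variable {ι : Type*}

/-- The box `∏ i, I i`, as a subset of Euclidean space. -/
def coordBox (I : ι → Set ℝ) : Set (EuclideanSpace ℝ ι) :=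
  {x | ∀ i, x i ∈ I i}

lemma coordBox_eq_preimage (I : ι → Set ℝ) :
    coordBox I = PiLp.homeomorph 2 (fun _ : ι => ℝ) ⁻¹' univ.pi I := by
  ext x
  exact mem_univ_pi.symm

lemma convex_coordBox {I : ι → Set ℝ} (hI : ∀ i, Convex ℝ (I i)) : Convex ℝ (coordBox I) := by
  intro x hx y hy a b ha hb hab i
  exact hI i (hx i) (hy i) ha hb hab

lemma closure_coordBox (I : ι → Set ℝ) :
    closure (coordBox I) = coordBox fun i => closure (I i) := by
  rw [coordBox_eq_preimage, coordBox_eq_preimage, ← Homeomorph.preimage_closure, closure_pi_set]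

variable [Finite ι]

lemma interior_coordBox (I : ι → Set ℝ) :
    interior (coordBox I) = coordBox fun i => interior (I i) := by
  rw [coordBox_eq_preimage, coordBox_eq_preimage, ← Homeomorph.preimage_interior,
    interior_pi_set finite_univ]

lemma isOpen_coordBox {I : ι → Set ℝ} (hI : ∀ i, IsOpen (I i)) : IsOpen (coordBox I) := by
  rw [coordBox_eq_preimage]
  exact (isOpen_set_pi finite_univ fun i _ => hI i).preimage (Homeomorph.continuous _)

end CoordBox

section Grid

variable {ι : Type*} [Fintype ι]

lemma volume_coordBox (I : ι → Set ℝ) : volume (coordBox I) = ∏ i, volume (I i) := by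
  rw [← Measure.pi_pi, ← volume_pi,
    ← (EuclideanSpace.volume_preserving_symm_measurableEquiv_toLp ι).measure_preimage_equiv]
  congr 1
  ext x
  simp [coordBox]

lemma dist_le_card_mul_of_forall_abs_sub_le {x y : EuclideanSpace ℝ ι} {h : ℝ}
    (hxy : ∀ i, |x i - y i| ≤ h) : dist x y ≤ Fintype.card ι * h := by
  classical
  calc dist x y = ‖∑ i, EuclideanSpace.single i ((x - y) i)‖ := by
        rw [dist_eq_norm]
        congr 1
        ext j
        simp
    _ ≤ ∑ i, ‖EuclideanSpace.single i ((x - y) i)‖ := norm_sum_le _ _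
    _ ≤ ∑ _i : ι, h := Finset.sum_le_sum fun i _ => by
        rw [PiLp.norm_single]
        exact hxy i
    _ = Fintype.card ι * h := by simp

lemma dense_setOf_dyadic {ι : Type*} [Finite ι] :
    Dense {z : EuclideanSpace ℝ ι | ∃ m : ℕ, ∀ i, ∃ k : ℤ, z i = k * (2⁻¹ : ℝ) ^ m} := by
  have := Fintype.ofFinite ι
  refine Metric.dense_iff.2 fun x r hr => ?_
  obtain ⟨m, hm⟩ := exists_pow_lt_of_lt_one
    (div_pos hr (by positivity : (0 : ℝ) < Fintype.card ι + 1)) (two_inv_lt_one : (2⁻¹ : ℝ) < 1)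
  have hpos : (0 : ℝ) < 2⁻¹ ^ m := by positivity
  let z : EuclideanSpace ℝ ι := WithLp.toLp 2 fun i => (⌊x i / 2⁻¹ ^ m⌋ : ℝ) * 2⁻¹ ^ m
  have hcoord : ∀ i, |z i - x i| ≤ 2⁻¹ ^ m := fun i => by
    have hfloor := Int.floor_le (x i / 2⁻¹ ^ m)
    have hceil := Int.lt_floor_add_one (x i / 2⁻¹ ^ m)
    rw [le_div_iff₀ hpos] at hfloor
    rw [div_lt_iff₀ hpos] at hceil
    simp only [z, abs_le]
    constructor <;> linarith
  refine ⟨z, mem_ball.2 ?_, m, fun i => ⟨_, rfl⟩⟩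
  rw [lt_div_iff₀ (by positivity)] at hm
  have hdist := dist_le_card_mul_of_forall_abs_sub_le hcoord
  linarith

lemma volume_crossingSet_coordBox_le [DecidableEq ι] (I : ι → Set ℝ)
    (E : Set (EuclideanSpace ℝ ι)) (z : EuclideanSpace ℝ ι) :
    volume (crossingSet (coordBox I) E z) ≤
      ∑ i, volume (crossingSet (coordBox I) E (EuclideanSpace.single i (z i))) := by
  have hpartial : ∀ (s : Finset ι) j, (∑ i ∈ s, EuclideanSpace.single i (z i)) j =
      if j ∈ s then z j else 0 := by
    intro s j
    simp
  have hsum : z = ∑ i, EuclideanSpace.single i (z i) := by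
    ext j
    simp [hpartial]
  suffices ∀ s : Finset ι,
      volume (crossingSet (coordBox I) E (∑ i ∈ s, EuclideanSpace.single i (z i))) ≤
        ∑ i ∈ s, volume (crossingSet (coordBox I) E (EuclideanSpace.single i (z i))) by
    conv_lhs => rw [hsum]
    exact this Finset.univ
  intro s
  induction s using Finset.induction_on with
  | empty => simp [crossingSet_zero]
  | insert i s his ih =>
    rw [Finset.sum_insert his, Finset.sum_insert his]
    refine (measure_crossingSet_add_le fun x hx hxs j => ?_).trans (add_le_add_right ih _)
    rcases eq_or_ne j i with rfl | hji
    · simpa [his, hpartial, -WithLp.ofLp_sum] using hxs j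
    · simpa [hji] using hx j

end Grid

section DyadicPerimeter

variable {ι : Type*} [Fintype ι] [DecidableEq ι] {A E : Set (EuclideanSpace ℝ ι)}

/-- The anisotropic difference quotient of the indicator of `E` in `A` at the scale `2⁻ᵐ`. -/
def dyadicVariation (A E : Set (EuclideanSpace ℝ ι)) (m : ℕ) : ℝ≥0∞ :=
  (∑ i, volume (crossingSet A E (EuclideanSpace.single i (2⁻¹ ^ m)))) / ENNReal.ofReal (2⁻¹ ^ m)

/-- The perimeter of `E` in `A`, measured by difference quotients along the coordinate directions
at dyadic scales. -/
def dyadicPerimeter (A E : Set (EuclideanSpace ℝ ι)) : ℝ≥0∞ :=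
  ⨆ m, dyadicVariation A E m

lemma sum_volume_crossingSet_le (m : ℕ) :
    ∑ i, volume (crossingSet A E (EuclideanSpace.single i (2⁻¹ ^ m))) ≤
      ENNReal.ofReal (2⁻¹ ^ m) * dyadicPerimeter A E :=
  (ENNReal.div_le_iff' (ENNReal.ofReal_pos.2 (by positivity)).ne' ENNReal.ofReal_ne_top).1
    (le_iSup (dyadicVariation A E) m)

lemma monotone_dyadicVariation (hA : Convex ℝ A) : Monotone (dyadicVariation A E) := by
  refine monotone_nat_of_le_succ fun m => ?_
  have hhalf : (2⁻¹ : ℝ) ^ m = 2 * 2⁻¹ ^ (m + 1) := by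
    rw [pow_succ, ← mul_assoc, mul_comm, inv_mul_cancel_left₀ two_ne_zero]
  have hstep : ∀ i, volume (crossingSet A E (EuclideanSpace.single i (2⁻¹ ^ m))) ≤
      2 * volume (crossingSet A E (EuclideanSpace.single i (2⁻¹ ^ (m + 1)))) := by
    intro i
    have h := measure_crossingSet_nsmul_le (μ := volume) (E := E) hA
      (EuclideanSpace.single i ((2⁻¹ : ℝ) ^ (m + 1))) 2
    rwa [two_nsmul, ← PiLp.single_add, ← two_mul, ← hhalf] at h
  calc dyadicVariation A E m
      ≤ (∑ i, 2 * volume (crossingSet A E (EuclideanSpace.single i (2⁻¹ ^ (m + 1))))) /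
          ENNReal.ofReal (2⁻¹ ^ m) := by
        unfold dyadicVariation
        gcongr with i
        exact hstep i
    _ = dyadicVariation A E (m + 1) := by
        rw [← Finset.mul_sum, hhalf, ENNReal.ofReal_mul zero_le_two, ENNReal.ofReal_ofNat,
          ENNReal.mul_div_mul_left _ _ two_ne_zero ENNReal.ofNat_ne_top, dyadicVariation]

lemma sum_volume_crossingSet_le_of_dyadic (hA : Convex ℝ A) {z : ι → ℝ} {m : ℕ} {L : ℝ}
    (hz : ∀ i, ∃ k : ℤ, z i = k * (2⁻¹ : ℝ) ^ m) (hzL : ∀ i, |z i| ≤ L) :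
    ∑ i, volume (crossingSet A E (EuclideanSpace.single i (z i))) ≤
      ENNReal.ofReal L * dyadicPerimeter A E := by
  choose k hk using hz
  have hpos : (0 : ℝ) < 2⁻¹ ^ m := by positivity
  have hcross : ∀ i, volume (crossingSet A E (EuclideanSpace.single i (z i))) ≤
      ENNReal.ofReal (L / 2⁻¹ ^ m) *
        volume (crossingSet A E (EuclideanSpace.single i (2⁻¹ ^ m))) := by
    intro i
    have hsingle : (EuclideanSpace.single i (z i) : EuclideanSpace ℝ ι) =
        k i • EuclideanSpace.single i ((2⁻¹ : ℝ) ^ m) := by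
      ext j
      simp [hk i, PiLp.single_apply]
    have habs : ((k i).natAbs : ℝ) ≤ L / 2⁻¹ ^ m := by
      have h := hzL i
      rw [hk i, abs_mul, abs_of_pos hpos] at h
      rwa [le_div_iff₀ hpos, Nat.cast_natAbs, Int.cast_abs]
    rw [hsingle]
    refine (measure_crossingSet_zsmul_le hA _ _).trans (mul_le_mul_left ?_ _)
    rw [← ENNReal.ofReal_natCast]
    exact ENNReal.ofReal_le_ofReal habs
  calc ∑ i, volume (crossingSet A E (EuclideanSpace.single i (z i)))
      ≤ ENNReal.ofReal (L / 2⁻¹ ^ m) *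
          ∑ i, volume (crossingSet A E (EuclideanSpace.single i (2⁻¹ ^ m))) := by
        rw [Finset.mul_sum]
        exact Finset.sum_le_sum fun i _ => hcross i
    _ ≤ ENNReal.ofReal (L / 2⁻¹ ^ m) * (ENNReal.ofReal (2⁻¹ ^ m) * dyadicPerimeter A E) := by
        gcongr
        exact sum_volume_crossingSet_le m
    _ = ENNReal.ofReal L * dyadicPerimeter A E := by
        rw [← mul_assoc, ← ENNReal.ofReal_mul' hpos.le, div_mul_cancel₀ _ hpos.ne']

lemma volume_crossingSet_single_le (hA : Convex ℝ A) {s : ℝ} {m : ℕ} (hs : |s| = 2⁻¹ ^ m) (i : ι) :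
    volume (crossingSet A E (EuclideanSpace.single i s)) ≤
      ENNReal.ofReal |s| * dyadicPerimeter A E := by
  have hdyadic : ∃ k : ℤ, s = k * (2⁻¹ : ℝ) ^ m := by
    rcases abs_choice s with h | h
    · exact ⟨1, by rw [← hs, h, Int.cast_one, one_mul]⟩
    · exact ⟨-1, by rw [← hs, h, Int.cast_neg, Int.cast_one, neg_mul_neg, one_mul]⟩
  exact (Finset.single_le_sum
      (f := fun i => volume (crossingSet A E (EuclideanSpace.single i s)))
      (fun _ _ => zero_le) (Finset.mem_univ i)).trans
    (sum_volume_crossingSet_le_of_dyadic hA (fun _ => hdyadic) fun _ => le_rfl)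

lemma volume_cube_diff_le {a : ι → ℝ} {L : ℝ} (hL : 0 < L) {M : ℝ≥0∞} (hE : MeasurableSet E)
    (hdens : volume (coordBox fun i => Ioo (a i) (a i + L)) ≤
      M * volume ((coordBox fun i => Ioo (a i) (a i + L)) ∩ E)) :
    volume ((coordBox fun i => Ioo (a i) (a i + L)) \ E) ≤ 2 ^ Fintype.card ι * M *
      (ENNReal.ofReal L * dyadicPerimeter (coordBox fun i => Ioo (a i) (a i + L)) E) := by
  set A : Set (EuclideanSpace ℝ ι) := coordBox fun i => Ioo (a i) (a i + L)
  set P := dyadicPerimeter A E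
  have hA : Convex ℝ A := convex_coordBox fun i => convex_Ioo _ _
  have hAvol : volume A = ENNReal.ofReal L ^ Fintype.card ι := by simp [A, volume_coordBox]
  let D : Set (EuclideanSpace ℝ ι) := coordBox fun _ => Ioo (-L) L
  have hDvol : volume D = 2 ^ Fintype.card ι * volume A := by
    rw [hAvol, ← mul_pow]
    simp [D, volume_coordBox, ← two_mul, ENNReal.ofReal_mul]
  have hAtop : volume A ≠ ∞ := hAvol ▸ ENNReal.pow_ne_top ENNReal.ofReal_ne_top
  have hA0 : volume A ≠ 0 := hAvol ▸ pow_ne_zero _ (by simpa using hL)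
  have hAD : ∀ x ∈ A, ∀ z, x + z ∈ A → z ∈ D := by
    intro x hx z hxz i
    have hxi := hx i
    have hxzi := hxz i
    simp only [PiLp.add_apply, mem_Ioo] at hxi hxzi ⊢
    constructor <;> linarith
  have hiso : volume (A ∩ E) * volume (A \ E) ≤ volume D * (ENNReal.ofReal L * P) := by
    refine measure_inter_mul_measure_diff_le (isOpen_coordBox fun _ => isOpen_Ioo).measurableSet
      hAtop hE (isOpen_coordBox fun _ => isOpen_Ioo) hAD dense_setOf_dyadic ?_
    rintro z ⟨hzD, m, hz⟩
    exact (volume_crossingSet_coordBox_le _ E z).trans <|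
      sum_volume_crossingSet_le_of_dyadic hA hz fun i => (abs_lt.2 (hzD i)).le
  refine (ENNReal.mul_le_mul_iff_right hA0 hAtop).1 ?_
  calc volume A * volume (A \ E) ≤ M * (volume (A ∩ E) * volume (A \ E)) := by
        rw [← mul_assoc]
        gcongr
    _ ≤ M * (volume D * (ENNReal.ofReal L * P)) := by gcongr
    _ = volume A * (2 ^ Fintype.card ι * M * (ENNReal.ofReal L * P)) := by
        rw [hDvol]
        ring

end DyadicPerimeter

/-! ### Slabs over the faces of a box -/

section Slab

variable {n : ℕ} {i : Fin (n + 1)} {c s : ℝ} {G : Set (Fin n → ℝ)} {E : Set (Ed (n + 1))}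

/-- The point of `ℝ^(n+1)` with `i`-th coordinate `c` and remaining coordinates `y`; for fixed `i`
and `c` this parametrizes the hyperplane `xᵢ = c`. -/
def insertCoord (i : Fin (n + 1)) (c : ℝ) (y : Fin n → ℝ) : Ed (n + 1) :=
  WithLp.toLp 2 (i.insertNth (α := fun _ => ℝ) c y)

lemma insertCoord_removeNth (i : Fin (n + 1)) (x : Ed (n + 1)) :
    insertCoord i (x i) (i.removeNth x.ofLp) = x := by
  rw [insertCoord, Fin.insertNth_self_removeNth, WithLp.toLp_ofLp]

lemma lipschitzWith_insertCoord (i : Fin (n + 1)) (c : ℝ) :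
    LipschitzWith (NNReal.sqrt (n + 1)) (insertCoord i c) := by
  have hins : LipschitzWith 1 fun y : Fin n → ℝ => i.insertNth (α := fun _ => ℝ) c y := by
    refine LipschitzWith.of_dist_le_mul fun y z => ?_
    rw [NNReal.coe_one, one_mul, dist_pi_le_iff dist_nonneg, Fin.forall_iff_succAbove i]
    simpa using fun j => dist_le_pi_dist y z j
  refine ((PiLp.lipschitzWith_toLp 2 fun _ : Fin (n + 1) => ℝ).comp hins).weaken ?_
  simp [NNReal.sqrt_eq_rpow]

/-- The points of `ℝ^(n+1)` lying strictly between the hyperplanes `xᵢ = c` and `xᵢ = c + s` whose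
remaining coordinates belong to `G`; the sign of `s` tells the side of the first hyperplane. -/
def slab (i : Fin (n + 1)) (c s : ℝ) (G : Set (Fin n → ℝ)) : Set (Ed (n + 1)) :=
  {x | (x i - c) / s ∈ Ioo (0 : ℝ) 1 ∧ i.removeNth x.ofLp ∈ G}

lemma slab_mono {G' : Set (Fin n → ℝ)} (h : G ⊆ G') : slab i c s G ⊆ slab i c s G' :=
  fun _ hx => ⟨hx.1, h hx.2⟩

lemma volume_setOf_coord_mem_and (i : Fin (n + 1)) (J : Set ℝ) (G : Set (Fin n → ℝ)) :
    volume {x : Ed (n + 1) | x i ∈ J ∧ i.removeNth x.ofLp ∈ G} = volume J * volume G := by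
  have h := ((EuclideanSpace.volume_preserving_symm_measurableEquiv_toLp (Fin (n + 1))).trans
    (volume_preserving_piFinSuccAbove (fun _ : Fin (n + 1) => ℝ) i)).measure_preimage_equiv
    (J ×ˢ G)
  rw [Measure.volume_eq_prod, Measure.prod_prod] at h
  exact h

lemma volume_slab (hs : s ≠ 0) (G : Set (Fin n → ℝ)) :
    volume (slab i c s G) = ENNReal.ofReal |s| * volume G := by
  have hlen : volume {t : ℝ | (t - c) / s ∈ Ioo (0 : ℝ) 1} = ENNReal.ofReal |s| := by
    have h := Real.volume_preimage_mul_right (inv_ne_zero hs) (Ioo 0 1)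
    rw [inv_inv, Real.volume_Ioo, sub_zero, ENNReal.ofReal_one, mul_one,
      ← measure_preimage_add_right volume (-c)] at h
    simp only [div_eq_mul_inv, sub_eq_add_neg]
    exact h
  rw [← hlen]
  exact volume_setOf_coord_mem_and i {t : ℝ | (t - c) / s ∈ Ioo (0 : ℝ) 1} G

lemma measurableSet_slab (hG : MeasurableSet G) : MeasurableSet (slab i c s G) := by
  have hi : Measurable fun x : Ed (n + 1) => (x i - c) / s := by fun_prop
  have hremove : Measurable fun x : Ed (n + 1) => i.removeNth x.ofLp :=
    measurable_pi_lambda _ fun j => by unfold Fin.removeNth; fun_prop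
  exact (hi measurableSet_Ioo).inter (hremove hG)

lemma add_nsmul_single_apply_sub_div (hs : s ≠ 0) (x : Ed (n + 1)) (k : ℕ) :
    ((x + k • EuclideanSpace.single i s) i - c) / s = (x i - c) / s + k := by
  simp only [PiLp.add_apply, PiLp.smul_apply, PiLp.single_apply, if_true, nsmul_eq_mul]
  field_simp
  ring

lemma mul_volume_slab_diff_le {I : Fin (n + 1) → Set ℝ} (hI : ∀ j, IsOpen (I j))
    (hE : MeasurableSet E) (hs : s ≠ 0) {N : ℕ} (hIi : ∀ τ ∈ Ioo (0 : ℝ) N, c + τ * s ∈ I i) :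
    N * volume (slab i c s (univ.pi fun j => I (i.succAbove j)) \ E) ≤
      N * volume (crossingSet (coordBox I) E (EuclideanSpace.single i s)) +
        volume (coordBox I \ E) := by
  refine mul_measure_diff_le_of_pairwiseDisjoint_translates
    (isOpen_coordBox hI).measurableSet hE
    (measurableSet_slab (MeasurableSet.univ_pi fun j => (hI _).measurableSet)) ?_ ?_
  · rintro k hk x ⟨⟨hx0, hx1⟩, hxI⟩
    refine (Fin.forall_iff_succAbove i).2 ⟨?_, fun j => ?_⟩
    · have hkN : (k : ℝ) + 1 ≤ N := by exact_mod_cast hk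
      have hmem := hIi ((x i - c) / s + k) ⟨by positivity, by linarith⟩
      rwa [← add_nsmul_single_apply_sub_div hs, div_mul_cancel₀ _ hs, add_sub_cancel] at hmem
    · simpa [Fin.removeNth] using hxI j (mem_univ j)
  · intro k _ l _ hkl
    refine Set.disjoint_left.2 ?_
    rintro _ ⟨x, ⟨⟨hx0, hx1⟩, -⟩, rfl⟩ ⟨y, ⟨⟨hy0, hy1⟩, -⟩, hxy⟩
    have htime := congrArg (fun z : Ed (n + 1) => (z i - c) / s) hxy
    simp only [add_nsmul_single_apply_sub_div hs] at htime
    have hkl' : (k : ℝ) < l + 1 := by linarith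
    have hlk' : (l : ℝ) < k + 1 := by linarith
    exact hkl (le_antisymm (Nat.lt_succ_iff.1 (by exact_mod_cast hkl'))
      (Nat.lt_succ_iff.1 (by exact_mod_cast hlk')))

/-- Distribute the points of `S` over a grid of `N ^ card ι` cells. -/
lemma measure_le_pow_mul_of_forall_abs_sub_le {α ι : Type*} [MeasurableSpace α] [Fintype ι]
    {μ : Measure α} {N : ℕ} {h : ℝ} (hh : 0 < h) {a : ι → ℝ} {p : α → ι → ℝ} {S : Set α}
    {b : ℝ≥0∞} (hp : ∀ w ∈ S, ∀ j, p w j ∈ Ioo (a j) (a j + N * h))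
    (hb : ∀ w ∈ S, μ {w' ∈ S | ∀ j, |p w' j - p w j| ≤ h} ≤ b) :
    μ S ≤ N ^ Fintype.card ι * b := by
  classical
  let cell : (ι → Fin N) → Set α := fun m => {w ∈ S | ∀ j, ⌊(p w j - a j) / h⌋ = (m j : ℕ)}
  have hcover : S ⊆ ⋃ m, cell m := by
    intro w hw
    have hnonneg : ∀ j, 0 ≤ ⌊(p w j - a j) / h⌋ := fun j =>
      Int.floor_nonneg.2 (div_nonneg (sub_nonneg.2 (hp w hw j).1.le) hh.le)
    have hlt : ∀ j, ⌊(p w j - a j) / h⌋ < N := fun j => by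
      rw [Int.floor_lt, div_lt_iff₀ hh, Int.cast_natCast]
      linarith [(hp w hw j).2]
    exact mem_iUnion.2 ⟨fun j => ⟨_, (Int.toNat_lt (hnonneg j)).2 (hlt j)⟩, hw,
      fun j => (Int.toNat_of_nonneg (hnonneg j)).symm⟩
  have hcell : ∀ m, μ (cell m) ≤ b := by
    intro m
    rcases (cell m).eq_empty_or_nonempty with hempty | ⟨w, hw, hwm⟩
    · simp [hempty]
    refine (measure_mono ?_).trans (hb w hw)
    rintro w' ⟨hw', hw'm⟩
    refine ⟨hw', fun j => ?_⟩
    have hclose := Int.abs_sub_lt_one_of_floor_eq_floor ((hw'm j).trans (hwm j).symm)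
    rw [← sub_div, sub_sub_sub_cancel_right, abs_div, abs_of_pos hh, div_lt_one hh] at hclose
    exact hclose.le
  calc μ S ≤ ∑ m, μ (cell m) := (measure_mono hcover).trans (measure_iUnion_fintype_le _ _)
    _ ≤ ∑ _m : ι → Fin N, b := Finset.sum_le_sum fun m _ => hcell m
    _ = N ^ Fintype.card ι * b := by simp

lemma volume_slab_inter_le (hs : s ≠ 0) {N : ℕ} {a : Fin n → ℝ} {b : ℝ≥0∞}
    (hG : ∀ y ∈ G, ∀ j, y j ∈ Ioo (a j) (a j + N * |s|))
    (hb : ∀ y ∈ G, volume (ball (insertCoord i c y) ((n + 2) * |s|) ∩ E) ≤ b) :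
    volume (slab i c s G ∩ E) ≤ N ^ n * b := by
  have hs' : 0 < |s| := abs_pos.2 hs
  have hgrid := measure_le_pow_mul_of_forall_abs_sub_le (μ := volume) (a := a) (b := b)
    (p := fun x : Ed (n + 1) => i.removeNth x.ofLp) (S := slab i c s G ∩ E) hs'
    (fun w hw => hG _ hw.1.2) fun w hw => (measure_mono ?_).trans (hb _ hw.1.2)
  · simpa using hgrid
  rintro x ⟨⟨⟨⟨hx0, hx1⟩, -⟩, hxE⟩, hclose⟩
  refine ⟨mem_ball.2 ?_, hxE⟩
  have hcoord : ∀ k, |x k - insertCoord i c (i.removeNth w.ofLp) k| ≤ |s| := by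
    refine (Fin.forall_iff_succAbove i).2 ⟨?_, fun j => ?_⟩
    · have hτ : |(x i - c) / s| ≤ 1 := abs_le.2 ⟨by linarith, hx1.le⟩
      rw [abs_div, div_le_one hs'] at hτ
      simpa [insertCoord] using hτ
    · simpa [insertCoord, Fin.removeNth] using hclose j
  have hdist := dist_le_card_mul_of_forall_abs_sub_le hcoord
  rw [Fintype.card_fin] at hdist
  push_cast at hdist
  linarith

end Slab

/-! ### The faces of a cube -/

lemma exists_pos_forall_volume_ball_inter_le {d : ℕ} {E : Set (Ed d)} {x : Ed d}
    (hx : x ∉ mtClosure E) {ε : ℝ≥0∞} (hε : 0 < ε) :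
    ∃ δ > 0, ∀ r ∈ Ioo 0 δ, volume (ball x r ∩ E) ≤ ε * ENNReal.ofReal (r ^ d) := by
  simp only [mtClosure, mem_ofPred_eq, not_lt, nonpos_iff_eq_zero] at hx
  have hev := eventually_lt_of_limsup_lt (hx.trans_lt hε)
  obtain ⟨δ, hδ, hlt⟩ := mem_nhdsGT_iff_exists_Ioo_subset.1 hev
  refine ⟨δ, hδ, fun r hr => ?_⟩
  have hpow : ENNReal.ofReal (r ^ d) ≠ 0 := (ENNReal.ofReal_pos.2 (pow_pos hr.1 d)).ne'
  exact (ENNReal.div_le_iff hpow ENNReal.ofReal_ne_top).1 (hlt hr).le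

lemma exists_nat_mul_two_inv_pow_eq_zpow (p : ℤ) {δ : ℝ} (hδ : 0 < δ) :
    ∃ m N : ℕ, N * (2⁻¹ : ℝ) ^ m = 2 ^ p ∧ (2⁻¹ : ℝ) ^ m < δ := by
  obtain ⟨m, hm⟩ := exists_pow_lt_of_lt_one hδ (two_inv_lt_one : (2⁻¹ : ℝ) < 1)
  refine ⟨m + p.natAbs, 2 ^ (p + (m + p.natAbs : ℕ)).toNat, ?_, ?_⟩
  · rw [Nat.cast_pow, Nat.cast_ofNat, ← zpow_natCast, Int.toNat_of_nonneg (by omega),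
      zpow_add₀ two_ne_zero, zpow_natCast, inv_pow, mul_inv_cancel_right₀ (by positivity)]
  · exact (pow_le_pow_of_le_one (by norm_num) two_inv_lt_one.le (by omega)).trans_lt hm

section Face

variable {n : ℕ} {a : Fin (n + 1) → ℝ} {i : Fin (n + 1)} {c s L : ℝ} {G : Set (Fin n → ℝ)}
  {E : Set (Ed (n + 1))} {M : ℝ≥0∞}

lemma mul_volume_face_le (hs : s ≠ 0) {N : ℕ} (hE : MeasurableSet E)
    (hci : ∀ τ ∈ Ioo (0 : ℝ) N, c + τ * s ∈ Ioo (a i) (a i + N * |s|)) {b : ℝ≥0∞}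
    (hG : G ⊆ univ.pi fun j => Ioo (a (i.succAbove j)) (a (i.succAbove j) + N * |s|))
    (hb : ∀ y ∈ G, volume (ball (insertCoord i c y) ((n + 2) * |s|) ∩ E) ≤ b) :
    N * (ENNReal.ofReal |s| * volume G) ≤ N * (N ^ n * b) +
      (N * volume (crossingSet (coordBox fun j => Ioo (a j) (a j + N * |s|)) E
          (EuclideanSpace.single i s)) +
        volume ((coordBox fun j => Ioo (a j) (a j + N * |s|)) \ E)) := by
  rw [← volume_slab hs G]
  calc N * volume (slab i c s G)
      ≤ N * (volume (slab i c s G ∩ E) + volume (slab i c s G \ E)) := by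
        gcongr
        exact (measure_inter_add_sdiff _ hE).ge
    _ ≤ N * (N ^ n * b) + N * volume (slab i c s
          (univ.pi fun j => Ioo (a (i.succAbove j)) (a (i.succAbove j) + N * |s|)) \ E) := by
        rw [mul_add]
        gcongr
        · exact volume_slab_inter_le hs (fun y hy j => hG hy j (mem_univ j)) hb
        · exact slab_mono hG
    _ ≤ _ := by
        gcongr
        exact mul_volume_slab_diff_le (fun _ => isOpen_Ioo) hE hs hci

lemma volume_face_le_of_scale {m N : ℕ} (hs : |s| = 2⁻¹ ^ m) (hN : N * |s| = L) (hL : 0 < L)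
    (hE : MeasurableSet E) (hci : ∀ τ ∈ Ioo (0 : ℝ) N, c + τ * s ∈ Ioo (a i) (a i + L))
    (hdens : volume (coordBox fun j => Ioo (a j) (a j + L)) ≤
      M * volume ((coordBox fun j => Ioo (a j) (a j + L)) ∩ E)) {ε : ℝ≥0∞}
    (hG : G ⊆ univ.pi fun j => Ioo (a (i.succAbove j)) (a (i.succAbove j) + L))
    (hε : ∀ y ∈ G, volume (ball (insertCoord i c y) ((n + 2) * |s|) ∩ E) ≤
      ε * ENNReal.ofReal (((n + 2) * |s|) ^ (n + 1))) :
    volume G ≤ ENNReal.ofReal L ^ n * (n + 2) ^ (n + 1) * ε +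
      (1 + 2 ^ (n + 1) * M) * dyadicPerimeter (coordBox fun j => Ioo (a j) (a j + L)) E := by
  subst hN
  set η := ENNReal.ofReal |s|
  set A : Set (Ed (n + 1)) := coordBox fun j => Ioo (a j) (a j + N * |s|)
  set P := dyadicPerimeter A E
  have hs0 : s ≠ 0 := abs_pos.1 (hs ▸ by positivity)
  have hlen : ENNReal.ofReal (N * |s|) = N * η := by
    rw [ENNReal.ofReal_mul N.cast_nonneg, ENNReal.ofReal_natCast]
  have hball : ENNReal.ofReal (((n + 2) * |s|) ^ (n + 1)) = (n + 2) ^ (n + 1) * η ^ (n + 1) := by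
    rw [ENNReal.ofReal_pow (by positivity), ENNReal.ofReal_mul (by positivity), mul_pow]
    norm_cast
  have hcross : volume (crossingSet A E (EuclideanSpace.single i s)) ≤ η * P :=
    volume_crossingSet_single_le (convex_coordBox fun _ => convex_Ioo _ _) hs i
  have hdiff : volume (A \ E) ≤ 2 ^ (n + 1) * M * (N * η * P) := by
    have h := volume_cube_diff_le hL hE hdens
    rwa [hlen, Fintype.card_fin] at h
  refine (ENNReal.mul_le_mul_iff_right (ENNReal.ofReal_pos.2 hL).ne' ENNReal.ofReal_ne_top).1 ?_
  calc ENNReal.ofReal (N * |s|) * volume G = N * (η * volume G) := by rw [hlen, mul_assoc]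
    _ ≤ N * (N ^ n * (ε * ((n + 2) ^ (n + 1) * η ^ (n + 1)))) +
          (N * (η * P) + 2 ^ (n + 1) * M * (N * η * P)) := by
        refine (mul_volume_face_le hs0 hE hci hG fun y hy => hball ▸ hε y hy).trans ?_
        gcongr
    _ = _ := by
        rw [hlen]
        ring

lemma exists_scale_inward (hc : c = a i ∨ c = a i + L) {h : ℝ} (hh : 0 < h) {N : ℕ}
    (hN : N * h = L) :
    ∃ s, |s| = h ∧ ∀ τ ∈ Ioo (0 : ℝ) N, c + τ * s ∈ Ioo (a i) (a i + L) := by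
  subst hN
  rcases hc with rfl | rfl
  · refine ⟨h, abs_of_pos hh, fun τ hτ => ⟨?_, ?_⟩⟩
    · linarith [mul_pos hτ.1 hh]
    · linarith [mul_lt_mul_of_pos_right hτ.2 hh]
  · refine ⟨-h, by rw [abs_neg, abs_of_pos hh], fun τ hτ => ⟨?_, ?_⟩⟩
    · linarith [mul_lt_mul_of_pos_right hτ.2 hh]
    · linarith [mul_pos hτ.1 hh]

lemma volume_face_le_add {p : ℤ} (hE : MeasurableSet E) (hc : c = a i ∨ c = a i + 2 ^ p)
    (hdens : volume (coordBox fun j => Ioo (a j) (a j + 2 ^ p)) ≤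
      M * volume ((coordBox fun j => Ioo (a j) (a j + 2 ^ p)) ∩ E)) {ε : ℝ≥0∞} (hε : 0 < ε) :
    volume {y ∈ univ.pi fun j => Ioo (a (i.succAbove j)) (a (i.succAbove j) + 2 ^ p) |
        insertCoord i c y ∉ mtClosure E} ≤
      ENNReal.ofReal (2 ^ p) ^ n * (n + 2) ^ (n + 1) * ε +
        (1 + 2 ^ (n + 1) * M) * dyadicPerimeter (coordBox fun j => Ioo (a j) (a j + 2 ^ p)) E := by
  let G : ℕ → Set (Fin n → ℝ) := fun k =>
    {y ∈ univ.pi fun j => Ioo (a (i.succAbove j)) (a (i.succAbove j) + 2 ^ p) |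
      ∀ r ∈ Ioo (0 : ℝ) (1 / (k + 1)),
        volume (ball (insertCoord i c y) r ∩ E) ≤ ε * ENNReal.ofReal (r ^ (n + 1))}
  have hmono : Monotone G := fun k l hkl y hy =>
    ⟨hy.1, fun r hr => hy.2 r ⟨hr.1, hr.2.trans_le (by gcongr)⟩⟩
  have hcover : {y ∈ univ.pi fun j => Ioo (a (i.succAbove j)) (a (i.succAbove j) + 2 ^ p) |
      insertCoord i c y ∉ mtClosure E} ⊆ ⋃ k, G k := by
    rintro y ⟨hy, hyE⟩
    obtain ⟨δ, hδ, hball⟩ := exists_pos_forall_volume_ball_inter_le hyE hε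
    obtain ⟨k, hk⟩ := exists_nat_one_div_lt hδ
    exact mem_iUnion.2 ⟨k, hy, fun r hr => hball r ⟨hr.1, hr.2.trans hk⟩⟩
  refine (measure_mono hcover).trans ?_
  rw [hmono.measure_iUnion]
  refine iSup_le fun k => ?_
  obtain ⟨m, N, hN, hm⟩ := exists_nat_mul_two_inv_pow_eq_zpow p
    (by positivity : (0 : ℝ) < 1 / (k + 1) / (n + 2))
  obtain ⟨s, hs, hci⟩ := exists_scale_inward hc (by positivity) hN
  rw [lt_div_iff₀' (by positivity), ← hs] at hm
  have hs0 : 0 < |s| := hs ▸ by positivity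
  exact volume_face_le_of_scale hs (hs.symm ▸ hN) (by positivity) hE hci hdens (fun y hy => hy.1)
    fun y hy => hy.2 _ ⟨by positivity, hm⟩

lemma volume_face_le {p : ℤ} (hE : MeasurableSet E) (hc : c = a i ∨ c = a i + 2 ^ p)
    (hdens : volume (coordBox fun j => Ioo (a j) (a j + 2 ^ p)) ≤
      M * volume ((coordBox fun j => Ioo (a j) (a j + 2 ^ p)) ∩ E)) :
    volume {y ∈ univ.pi fun j => Ioo (a (i.succAbove j)) (a (i.succAbove j) + 2 ^ p) |
        insertCoord i c y ∉ mtClosure E} ≤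
      (1 + 2 ^ (n + 1) * M) * dyadicPerimeter (coordBox fun j => Ioo (a j) (a j + 2 ^ p)) E := by
  set K : ℝ≥0∞ := ENNReal.ofReal (2 ^ p) ^ n * (n + 2) ^ (n + 1)
  set P := dyadicPerimeter (coordBox fun j => Ioo (a j) (a j + 2 ^ p)) E
  have hK : K ≠ ∞ := by finiteness
  have hlim : Tendsto (fun ε : ℝ≥0∞ => K * ε + (1 + 2 ^ (n + 1) * M) * P) (𝓝[>] 0)
      (𝓝 (K * 0 + (1 + 2 ^ (n + 1) * M) * P)) :=
    ((ENNReal.Tendsto.const_mul tendsto_id (.inr hK)).add_const _).mono_left nhdsWithin_le_nhds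
  rw [mul_zero, zero_add] at hlim
  exact ge_of_tendsto hlim
    (eventually_nhdsWithin_of_forall fun ε hε => volume_face_le_add hE hc hdens hε)

end Face

/-! ### The boundary of a dyadic cube -/

section Boundary

variable {n : ℕ} {M : ℝ≥0∞}

lemma hausdorffMeasure_image_insertCoord_le (i : Fin (n + 1)) (c : ℝ) (G : Set (Fin n → ℝ)) :
    μH[(n : ℝ)] (insertCoord i c '' G) ≤ (NNReal.sqrt (n + 1) : ℝ≥0∞) ^ n * volume G := by
  have h := (lipschitzWith_insertCoord i c).hausdorffMeasure_image_le n.cast_nonneg G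
  rw [ENNReal.rpow_natCast] at h
  simpa [← hausdorffMeasure_pi_real] using h

/-- The constant bounding, by the dyadic perimeter of `E`, the measure of the part of the boundary
of a cube `Q ⊆ ℝ^(n+1)` that lies outside `mtClosure E`, when `|Q| ≤ M |Q ∩ E|`. -/
def boundaryConst (n : ℕ) (M : ℝ≥0∞) : ℝ≥0∞ :=
  2 * (n + 1) * ((NNReal.sqrt (n + 1) : ℝ≥0∞) ^ n * (1 + 2 ^ (n + 1) * M))

lemma boundaryConst_ne_top (hM : M ≠ ∞) : boundaryConst n M ≠ ∞ := by
  unfold boundaryConst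
  finiteness

lemma hausdorffMeasure_face_le {a : Fin (n + 1) → ℝ} {i : Fin (n + 1)} {c : ℝ} {p : ℤ}
    {E : Set (Ed (n + 1))} (hE : MeasurableSet E) (hc : c = a i ∨ c = a i + 2 ^ p)
    (hdens : volume (coordBox fun j => Ioo (a j) (a j + 2 ^ p)) ≤
      M * volume ((coordBox fun j => Ioo (a j) (a j + 2 ^ p)) ∩ E)) :
    μH[(n : ℝ)] ({x ∈ coordBox fun j => Icc (a j) (a j + 2 ^ p) | x i = c} \ mtClosure E) ≤
      (NNReal.sqrt (n + 1) : ℝ≥0∞) ^ n * ((1 + 2 ^ (n + 1) * M) *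
        dyadicPerimeter (coordBox fun j => Ioo (a j) (a j + 2 ^ p)) E) := by
  let S : Set (Fin n → ℝ) :=
    {y ∈ univ.pi fun j => Icc (a (i.succAbove j)) (a (i.succAbove j) + 2 ^ p) |
      insertCoord i c y ∉ mtClosure E}
  have hcover : {x ∈ coordBox fun j => Icc (a j) (a j + 2 ^ p) | x i = c} \ mtClosure E ⊆
      insertCoord i c '' S := by
    rintro x ⟨⟨hx, rfl⟩, hxE⟩
    refine ⟨i.removeNth x.ofLp, ⟨fun j _ => hx _, ?_⟩, insertCoord_removeNth i x⟩
    rwa [insertCoord_removeNth]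
  refine (measure_mono hcover).trans <| (hausdorffMeasure_image_insertCoord_le i c S).trans ?_
  gcongr
  refine (measure_mono_ae ?_).trans (volume_face_le hE hc hdens)
  have hae := Measure.univ_pi_Ioo_ae_eq_Icc (μ := fun _ : Fin n => (volume : Measure ℝ))
    (f := fun j => a (i.succAbove j)) (g := fun j => a (i.succAbove j) + 2 ^ p)
  filter_upwards [hae.mem_iff] with y hy hyS
  exact ⟨hy.2 ⟨fun j => (hyS.1 j trivial).1, fun j => (hyS.1 j trivial).2⟩, hyS.2⟩

lemma frontier_coordBox_Ico_subset {a : Fin n → ℝ} {L : ℝ} (hL : 0 < L) :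
    frontier (coordBox fun j => Ico (a j) (a j + L)) ⊆
      ⋃ i, ({x ∈ coordBox fun j => Icc (a j) (a j + L) | x i = a i} ∪
        {x ∈ coordBox fun j => Icc (a j) (a j + L) | x i = a i + L}) := by
  intro x hx
  have hne : ∀ j, a j ≠ a j + L := fun j => (lt_add_of_pos_right _ hL).ne
  simp only [frontier, closure_coordBox, interior_coordBox, closure_Ico (hne _), interior_Ico]
    at hx
  obtain ⟨hIcc, hIoo⟩ := hx
  by_contra! hmem
  simp only [mem_iUnion, mem_union, mem_ofPred_eq, not_exists, not_or, not_and] at hmem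
  exact hIoo fun j =>
    ⟨(hIcc j).1.lt_of_ne' ((hmem j).1 hIcc), (hIcc j).2.lt_of_ne ((hmem j).2 hIcc)⟩

lemma IsDyadicCube.exists_eq_coordBox {d : ℕ} {Q : Set (Ed d)} (hQ : IsDyadicCube Q) :
    ∃ (a : Fin d → ℝ) (p : ℤ), Q = coordBox fun i => Ico (a i) (a i + 2 ^ p) := by
  obtain ⟨p, m, rfl⟩ := hQ
  exact ⟨fun i => 2 ^ p * m i, p, by simp only [mul_add, mul_one, coordBox]⟩

lemma IsDyadicCube.interior_ae_eq {d : ℕ} {Q : Set (Ed d)} (hQ : IsDyadicCube Q) :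
    interior Q =ᵐ[volume] Q := by
  obtain ⟨a, p, rfl⟩ := hQ.exists_eq_coordBox
  refine ae_eq_of_subset_of_measure_ge interior_subset ?_
    isOpen_interior.measurableSet.nullMeasurableSet ?_
  · simp [interior_coordBox, volume_coordBox]
  · simp [volume_coordBox]

lemma IsDyadicCube.convex_interior {d : ℕ} {Q : Set (Ed d)} (hQ : IsDyadicCube Q) :
    Convex ℝ (interior Q) := by
  obtain ⟨a, p, rfl⟩ := hQ.exists_eq_coordBox
  exact (convex_coordBox fun i => convex_Ico _ _).interior

lemma IsDyadicCube.hausdorffMeasure_frontier_le {Q E : Set (Ed (n + 1))} (hQ : IsDyadicCube Q)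
    (hE : MeasurableSet E) (hdens : volume Q ≤ M * volume (Q ∩ E)) :
    μH[(n : ℝ)] (frontier Q \ mtClosure E) ≤
      boundaryConst n M * dyadicPerimeter (interior Q) E := by
  have hae := hQ.interior_ae_eq
  rw [← measure_congr hae, ← measure_congr (hae.inter (ae_eq_refl E))] at hdens
  obtain ⟨a, p, rfl⟩ := hQ.exists_eq_coordBox
  simp only [interior_coordBox, interior_Ico] at hdens ⊢
  set P := dyadicPerimeter (coordBox fun j => Ioo (a j) (a j + 2 ^ p)) E
  set κ := (NNReal.sqrt (n + 1) : ℝ≥0∞) ^ n * ((1 + 2 ^ (n + 1) * M) * P)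
  have hcover := sdiff_subset_sdiff_left (t := mtClosure E)
    (frontier_coordBox_Ico_subset (a := a) (by positivity : (0 : ℝ) < 2 ^ p))
  simp only [iUnion_sdiff, union_sdiff_distrib] at hcover
  calc μH[(n : ℝ)] (frontier (coordBox fun j => Ico (a j) (a j + 2 ^ p)) \ mtClosure E)
      ≤ ∑ _i : Fin (n + 1), (κ + κ) := by
        refine (measure_mono hcover).trans <| (measure_iUnion_fintype_le _ _).trans <|
          Finset.sum_le_sum fun i _ => (measure_union_le _ _).trans (add_le_add ?_ ?_)
        · exact hausdorffMeasure_face_le hE (.inl rfl) hdens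
        · exact hausdorffMeasure_face_le hE (.inr rfl) hdens
    _ = boundaryConst n M * P := by
        simp only [Finset.sum_const, Finset.card_univ, Fintype.card_fin, nsmul_eq_mul,
          boundaryConst, κ]
        push_cast
        ring

end Boundary

/-! ### Variation and translations -/

section SegmentAverage

variable {F : Type*} [NormedAddCommGroup F] [NormedSpace ℝ F] {ψ : F → ℝ} {v : F}

/-- The average of `ψ` over the segment from `x - v` to `x`, a primitive of the difference
`ψ x - ψ (x - v)` in the direction `v`. -/
def segmentAverage (ψ : F → ℝ) (v x : F) : ℝ :=
  ∫ s in (0 : ℝ)..1, ψ (x - s • v)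

lemma tsupport_segmentAverage_subset (hc : HasCompactSupport ψ) :
    tsupport (segmentAverage ψ v) ⊆
      (fun q : F × ℝ => q.1 + q.2 • v) '' (tsupport ψ ×ˢ Icc 0 1) := by
  have hK : IsCompact ((fun q : F × ℝ => q.1 + q.2 • v) '' (tsupport ψ ×ˢ Icc 0 1)) :=
    (hc.isCompact.prod isCompact_Icc).image (by fun_prop)
  refine closure_minimal (fun x hx => ?_) hK.isClosed
  by_contra hxK
  refine hx (intervalIntegral.integral_zero_ae (Eventually.of_forall fun s hs => ?_))
  rw [uIoc_of_le zero_le_one] at hs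
  by_contra hne
  exact hxK ⟨(x - s • v, s), ⟨subset_tsupport _ hne, hs.1.le, hs.2⟩, sub_add_cancel _ _⟩

lemma hasCompactSupport_segmentAverage (hc : HasCompactSupport ψ) :
    HasCompactSupport (segmentAverage ψ v) :=
  ((hc.isCompact.prod isCompact_Icc).image (by fun_prop)).of_isClosed_subset
    (isClosed_tsupport _) (tsupport_segmentAverage_subset hc)

lemma abs_segmentAverage_le {C : ℝ} (hψ : ∀ x, |ψ x| ≤ C) (x : F) :
    |segmentAverage ψ v x| ≤ C := by
  have h := intervalIntegral.norm_integral_le_of_norm_le_const (a := 0) (b := 1)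
    (f := fun s => ψ (x - s • v)) fun s _ => hψ _
  rwa [sub_zero, abs_one, mul_one] at h

lemma contDiff_segmentAverage {k : ℕ∞} (hψ : ContDiff ℝ k ψ) (hc : HasCompactSupport ψ) :
    ContDiff ℝ k (segmentAverage ψ v) := by
  borelize F
  let μ : Measure F := (volume.restrict (Ioc (0 : ℝ) 1)).map fun s => s • v
  have hconv : segmentAverage ψ v =
      convolution (fun _ => (1 : ℝ)) ψ (ContinuousLinearMap.mul ℝ ℝ) μ := by
    ext x
    rw [convolution_mul, integral_map (by fun_prop)
      (by have := hψ.continuous; exact Continuous.aestronglyMeasurable (by fun_prop))]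
    simp only [one_mul, segmentAverage, intervalIntegral.integral_of_le zero_le_one]
  rw [hconv]
  exact hc.contDiff_convolution_right _ (integrable_const _).locallyIntegrable hψ

lemma fderiv_segmentAverage_apply (hψ : ContDiff ℝ 1 ψ) (hc : HasCompactSupport ψ) (x : F) :
    fderiv ℝ (segmentAverage ψ v) x v = ψ x - ψ (x - v) := by
  have hψc := hψ.continuous
  let u : ℝ → ℝ := fun s => ψ (x + s • v)
  have hu : Continuous u := by fun_prop
  have hline : ∀ t : ℝ, segmentAverage ψ v (x + t • v) =
      (∫ s in (0 : ℝ)..t, u s) - ∫ s in (0 : ℝ)..(t - 1), u s := by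
    intro t
    rw [intervalIntegral.integral_interval_sub_left (hu.intervalIntegrable _ _)
      (hu.intervalIntegrable _ _), segmentAverage]
    simp only [add_sub_assoc, ← sub_smul]
    have h := intervalIntegral.integral_comp_sub_left (a := 0) (b := 1) u t
    rwa [sub_zero] at h
  have hderiv : HasDerivAt (fun t : ℝ => segmentAverage ψ v (x + t • v)) (u 0 - u (0 - 1)) 0 := by
    simp only [hline]
    exact (hu.integral_hasStrictDerivAt 0 0).hasDerivAt.sub
      ((hu.integral_hasStrictDerivAt 0 (0 - 1)).hasDerivAt.comp_sub_const 0 1)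
  have hdiff := (contDiff_segmentAverage (v := v) (k := 1) hψ hc).differentiable one_ne_zero x
  rw [← hdiff.lineDeriv_eq_fderiv, lineDeriv, hderiv.deriv]
  simp [u, sub_eq_add_neg]

end SegmentAverage

section Duality

variable {F : Type*} [NormedAddCommGroup F] [NormedSpace ℝ F] [FiniteDimensional ℝ F]
  {K₁ K₂ V : Set F}

lemma exists_contDiff_eqOn_one_eqOn_neg_one (hK₁ : IsCompact K₁) (hK₂ : IsCompact K₂)
    (hdisj : Disjoint K₁ K₂) (hV : IsOpen V) (hKV : K₁ ∪ K₂ ⊆ V) :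
    ∃ ψ : F → ℝ, ContDiff ℝ 1 ψ ∧ HasCompactSupport ψ ∧ tsupport ψ ⊆ V ∧ (∀ x, |ψ x| ≤ 1) ∧
      EqOn ψ 1 K₁ ∧ EqOn ψ (-1) K₂ := by
  obtain ⟨K, hK, hK₁₂K, hKV⟩ := exists_compact_between (hK₁.union hK₂) hV hKV
  obtain ⟨χ, hχone, hχzero, hχ⟩ := exists_contMDiffMap_one_nhds_of_subset_interior (n := 1)
    (modelWithCornersSelf ℝ F) (hK₁.union hK₂).isClosed hK₁₂K
  obtain ⟨θ, hθzero, hθone, hθ⟩ := exists_contMDiffMap_zero_one_of_isClosed (n := 1)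
    (modelWithCornersSelf ℝ F) hK₂.isClosed hK₁.isClosed hdisj.symm
  have hχone := fun x hx => hχone.self_of_nhdsSet x hx
  have hχdiff : ContDiff ℝ 1 χ := χ.contMDiff.contDiff
  have hθdiff : ContDiff ℝ 1 θ := θ.contMDiff.contDiff
  have hsupp : tsupport (fun x => χ x * (2 * θ x - 1)) ⊆ K := by
    refine closure_minimal (fun x hx => ?_) hK.isClosed
    by_contra hxK
    simp [hχzero x hxK] at hx
  refine ⟨fun x => χ x * (2 * θ x - 1), by fun_prop,
    hK.of_isClosed_subset (isClosed_tsupport _) hsupp, hsupp.trans hKV, fun x => ?_,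
    fun x hx => ?_, fun x hx => ?_⟩
  · rw [abs_mul]
    refine mul_le_one₀ (abs_le.2 ?_) (abs_nonneg _) (abs_le.2 ?_)
    · constructor <;> linarith [(hχ x).1, (hχ x).2]
    · constructor <;> linarith [(hθ x).1, (hθ x).2]
  · simp only [hχone x (.inl hx), hθone hx, Pi.one_apply]
    norm_num
  · simp only [hχone x (.inr hx), hθzero hx, Pi.zero_apply, Pi.neg_apply, Pi.one_apply]
    norm_num

variable [MeasurableSpace F] [BorelSpace F]

lemma exists_contDiff_measure_setOf_ne_le (ν : Measure F) [IsFiniteMeasure ν] {S₁ S₂ : Set F}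
    (hS₁ : MeasurableSet S₁) (hS₂ : MeasurableSet S₂) (hdisj : Disjoint S₁ S₂) (hV : IsOpen V)
    (hSV : S₁ ∪ S₂ ⊆ V) {ε : ℝ≥0∞} (hε : ε ≠ 0) :
    ∃ ψ : F → ℝ, ContDiff ℝ 1 ψ ∧ HasCompactSupport ψ ∧ tsupport ψ ⊆ V ∧ (∀ x, |ψ x| ≤ 1) ∧
      ν ({x ∈ S₁ | ψ x ≠ 1} ∪ {x ∈ S₂ | ψ x ≠ -1}) ≤ ε := by
  have hε2 : ε / 2 ≠ 0 := (ENNReal.half_pos hε).ne'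
  obtain ⟨K₁, hKS₁, hK₁, hν₁⟩ := hS₁.exists_isCompact_sdiff_lt (measure_ne_top ν _) hε2
  obtain ⟨K₂, hKS₂, hK₂, hν₂⟩ := hS₂.exists_isCompact_sdiff_lt (measure_ne_top ν _) hε2
  obtain ⟨ψ, hψ, hc, hsupp, hψ1, hψK₁, hψK₂⟩ := exists_contDiff_eqOn_one_eqOn_neg_one hK₁ hK₂
    (hdisj.mono hKS₁ hKS₂) hV ((union_subset_union hKS₁ hKS₂).trans hSV)
  refine ⟨ψ, hψ, hc, hsupp, hψ1, ?_⟩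
  calc ν ({x ∈ S₁ | ψ x ≠ 1} ∪ {x ∈ S₂ | ψ x ≠ -1}) ≤ ν (S₁ \ K₁) + ν (S₂ \ K₂) := by
        refine (measure_union_le _ _).trans (add_le_add (measure_mono ?_) (measure_mono ?_))
        · exact fun x hx => ⟨hx.1, fun hxK => hx.2 (hψK₁ hxK)⟩
        · exact fun x hx => ⟨hx.1, fun hxK => hx.2 (hψK₂ hxK)⟩
    _ ≤ ε / 2 + ε / 2 := add_le_add hν₁.le hν₂.le
    _ = ε := ENNReal.add_halves ε

lemma lintegral_enorm_le_ofReal_integral_add {α : Type*} [MeasurableSpace α] {μ : Measure α}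
    {g ψ : α → ℝ} (hgm : Measurable g) (hg : Integrable g μ) (hψm : Measurable ψ)
    (hψ : ∀ x, |ψ x| ≤ 1) :
    ∫⁻ x, ‖g x‖ₑ ∂μ ≤ ENNReal.ofReal (∫ x, g x * ψ x ∂μ) +
      2 * μ.withDensity (fun x => ‖g x‖ₑ)
        ({x ∈ {x | 0 < g x} | ψ x ≠ 1} ∪ {x ∈ {x | g x < 0} | ψ x ≠ -1}) := by
  set B : Set α := {x ∈ {x | 0 < g x} | ψ x ≠ 1} ∪ {x ∈ {x | g x < 0} | ψ x ≠ -1}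
  have hB : MeasurableSet B := by measurability
  have hgψ : Integrable (fun x => g x * ψ x) μ :=
    hg.mul_bdd (c := 1) hψm.aestronglyMeasurable (Eventually.of_forall hψ)
  have hint : Integrable (fun x => |g x| - g x * ψ x) μ := hg.abs.sub hgψ
  have hle : ∀ x, |g x * ψ x| ≤ |g x| := fun x => by
    rw [abs_mul]
    exact mul_le_of_le_one_right (abs_nonneg _) (hψ x)
  have hpointwise : ∀ x, ENNReal.ofReal (|g x| - g x * ψ x) ≤
      B.indicator (fun x => 2 * ‖g x‖ₑ) x := by
    intro x
    by_cases hx : x ∈ B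
    · rw [indicator_of_mem hx, Real.enorm_eq_ofReal_abs, ← ENNReal.ofReal_ofNat,
        ← ENNReal.ofReal_mul zero_le_two]
      exact ENNReal.ofReal_le_ofReal (by linarith [neg_le_of_abs_le (hle x)])
    · simp only [B, mem_union, mem_ofPred_eq, not_or, not_and, not_not] at hx
      rcases lt_trichotomy (g x) 0 with hneg | hzero | hpos
      · simp [hx.2 hneg, abs_of_neg hneg]
      · simp [hzero]
      · simp [hx.1 hpos, abs_of_pos hpos]
  calc ∫⁻ x, ‖g x‖ₑ ∂μ = ENNReal.ofReal (∫ x, g x * ψ x ∂μ + ∫ x, (|g x| - g x * ψ x) ∂μ) := by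
        rw [integral_sub hg.abs hgψ, add_sub_cancel]
        exact (ofReal_integral_norm_eq_lintegral_enorm hg).symm
    _ ≤ ENNReal.ofReal (∫ x, g x * ψ x ∂μ) + ENNReal.ofReal (∫ x, (|g x| - g x * ψ x) ∂μ) :=
        ENNReal.ofReal_add_le
    _ ≤ ENNReal.ofReal (∫ x, g x * ψ x ∂μ) + ∫⁻ x, B.indicator (fun x => 2 * ‖g x‖ₑ) x ∂μ := by
        rw [ofReal_integral_eq_lintegral_ofReal hint
          (Eventually.of_forall fun x => sub_nonneg.2 ((le_abs_self _).trans (hle x)))]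
        gcongr with x
        exact hpointwise x
    _ = _ := by
        rw [lintegral_indicator hB, lintegral_const_mul _ hgm.enorm, withDensity_apply _ hB]

lemma lintegral_enorm_le_of_forall_integral_mul_le {μ : Measure F} (hV : IsOpen V) {g : F → ℝ}
    (hgm : Measurable g) (hg : IntegrableOn g V μ) {c : ℝ≥0∞}
    (hc : ∀ ψ : F → ℝ, ContDiff ℝ 1 ψ → HasCompactSupport ψ → tsupport ψ ⊆ V → (∀ x, |ψ x| ≤ 1) →
      ENNReal.ofReal (∫ x in V, g x * ψ x ∂μ) ≤ c) :
    ∫⁻ x in V, ‖g x‖ₑ ∂μ ≤ c := by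
  let ν := (μ.restrict V).withDensity fun x => ‖g x‖ₑ
  have hν : IsFiniteMeasure ν := isFiniteMeasure_withDensity hg.2.ne
  refine ENNReal.le_of_forall_pos_le_add fun ε hε _ => ?_
  have hε2 : (ε : ℝ≥0∞) / 2 ≠ 0 := (ENNReal.half_pos (ENNReal.coe_pos.2 hε).ne').ne'
  have hpos : MeasurableSet {x | 0 < g x} := measurableSet_lt measurable_const hgm
  have hneg : MeasurableSet {x | g x < 0} := measurableSet_lt hgm measurable_const
  obtain ⟨ψ, hψ, hψc, hsupp, hψ1, hνψ⟩ := exists_contDiff_measure_setOf_ne_le ν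
    (hV.measurableSet.inter hpos) (hV.measurableSet.inter hneg)
    (Set.disjoint_left.2 fun x hx hx' => lt_asymm (a := g x) hx'.2 hx.2) hV
    (union_subset inter_subset_left inter_subset_left) hε2
  have hVν : ∀ᵐ x ∂ν, x ∈ V :=
    (withDensity_absolutelyContinuous _ _).ae_le (ae_restrict_mem hV.measurableSet)
  have hbad : ν ({x ∈ {x | 0 < g x} | ψ x ≠ 1} ∪ {x ∈ {x | g x < 0} | ψ x ≠ -1}) ≤ ε / 2 := by
    refine (measure_mono_ae ?_).trans hνψ
    filter_upwards [hVν] with x hx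
    exact Or.imp (fun h => ⟨⟨hx, h.1⟩, h.2⟩) fun h => ⟨⟨hx, h.1⟩, h.2⟩
  calc ∫⁻ x in V, ‖g x‖ₑ ∂μ ≤ ENNReal.ofReal (∫ x in V, g x * ψ x ∂μ) + 2 * (ε / 2) :=
        (lintegral_enorm_le_ofReal_integral_add hgm hg hψ.continuous.measurable hψ1).trans
          (by gcongr)
    _ ≤ c + ε := by
        rw [ENNReal.mul_div_cancel two_ne_zero ENNReal.ofNat_ne_top]
        gcongr
        exact hc ψ hψ hψc hsupp hψ1

end Duality

section Variation

variable {d : ℕ} {U V : Set (Ed d)} {f : Ed d → ℝ}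

lemma var_congr {g : Ed d → ℝ} (hfg : f =ᵐ[volume.restrict U] g) : var U f = var U g := by
  have hint : ∀ φ : Ed d → Ed d,
      ∫ x in U, f x * divergence φ x = ∫ x in U, g x * divergence φ x := fun φ =>
    integral_congr_ae (by filter_upwards [hfg] with x hx; rw [hx])
  simp only [var, hint]

lemma divergence_smul_const {a : Ed d → ℝ} {x : Ed d} (ha : DifferentiableAt ℝ a x) (w : Ed d) :
    divergence (fun y => a y • w) x = fderiv ℝ a x w := by
  have hw : w = ∑ i, w i • EuclideanSpace.single i (1 : ℝ) := by
    ext j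
    simp [Pi.single_apply]
  conv_rhs => rw [hw, map_sum]
  rw [divergence, (ha.hasFDerivAt.smul_const w).fderiv]
  simp [mul_comm]

lemma ofReal_integral_mul_fderiv_le_var {a : Ed d → ℝ} (ha : ContDiff ℝ 1 a)
    (hc : HasCompactSupport a) (hsupp : tsupport a ⊆ U) (ha1 : ∀ x, |a x| ≤ 1) (w : Ed d) :
    ENNReal.ofReal (∫ x in U, f x * fderiv ℝ a x w) ≤ ‖w‖ₑ * var U f := by
  rcases eq_or_ne w 0 with rfl | hw
  · simp
  have hnorm : ‖w‖ ≠ 0 := norm_ne_zero_iff.2 hw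
  let φ : Ed d → Ed d := fun x => a x • (‖w‖⁻¹ • w)
  have hφ : φ ∈ {φ : Ed d → Ed d | ContDiff ℝ 1 φ ∧ HasCompactSupport φ ∧ tsupport φ ⊆ U ∧
      ∀ x, ‖φ x‖ ≤ 1} := by
    refine ⟨ha.smul contDiff_const, hc.smul_right, (tsupport_smul_subset_left _ _).trans hsupp,
      fun x => ?_⟩
    rw [norm_smul, norm_smul, norm_inv, norm_norm, inv_mul_cancel₀ hnorm, mul_one]
    exact ha1 x
  have hdiv : ∀ x, fderiv ℝ a x w = ‖w‖ * divergence φ x := fun x => by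
    rw [divergence_smul_const (ha.differentiable one_ne_zero x), map_smul, smul_eq_mul,
      mul_inv_cancel_left₀ hnorm]
  simp only [hdiv, mul_left_comm _ ‖w‖]
  rw [integral_const_mul, ENNReal.ofReal_mul (norm_nonneg w), ofReal_norm]
  gcongr
  exact le_iSup₂ (f := fun (φ : Ed d → Ed d) _ => ENNReal.ofReal (∫ x in U, f x * divergence φ x))
    φ hφ

lemma setIntegral_translate_sub_mul (hU : MeasurableSet U) (hV : MeasurableSet V) {v : Ed d}
    (hVU : ∀ x ∈ V, x ∈ U ∧ x + v ∈ U) (hf : IntegrableOn f U) {ψ : Ed d → ℝ}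
    (hψ : Continuous ψ) (hψ1 : ∀ x, |ψ x| ≤ 1) (hψV : ∀ x ∉ V, ψ x = 0) :
    ∫ x in V, (f (x + v) - f x) * ψ x = ∫ x in U, f x * (ψ (x - v) - ψ x) := by
  have hint : ∀ y, Integrable fun x => U.indicator f (x + y) * ψ x := fun y =>
    (((integrable_indicator_iff hU).2 hf).comp_add_right y).mul_bdd (c := 1)
      hψ.aestronglyMeasurable (Eventually.of_forall hψ1)
  have hint₀ : Integrable fun x => U.indicator f x * ψ x := by simpa using hint 0
  have hintv : Integrable fun x => U.indicator f x * ψ (x - v) := by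
    simpa using (hint v).comp_sub_right v
  calc ∫ x in V, (f (x + v) - f x) * ψ x
      = ∫ x, (U.indicator f (x + v) * ψ x - U.indicator f x * ψ x) := by
        refine (setIntegral_congr_fun hV fun x hx => ?_).trans
          (setIntegral_eq_integral_of_forall_compl_eq_zero fun x hx => by simp [hψV x hx])
        simp only [indicator_of_mem (hVU x hx).1, indicator_of_mem (hVU x hx).2, sub_mul]
    _ = ∫ x, (U.indicator f x * ψ (x - v) - U.indicator f x * ψ x) := by
        rw [integral_sub (hint v) hint₀, integral_sub hintv hint₀,
          ← integral_add_right_eq_self (fun x => U.indicator f x * ψ (x - v)) v]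
        simp only [add_sub_cancel_right]
    _ = ∫ x in U, f x * (ψ (x - v) - ψ x) := by
        simp only [← mul_sub]
        rw [← integral_indicator hU]
        exact integral_congr_ae <| Eventually.of_forall fun x =>
          (indicator_mul_left U f fun x => ψ (x - v) - ψ x).symm

lemma lintegral_enorm_translate_sub_le_var (hU : IsOpen U) (hV : IsOpen V) {v : Ed d}
    (hVU : ∀ x ∈ V, ∀ s ∈ Icc (0 : ℝ) 1, x + s • v ∈ U) (hfm : Measurable f)
    (hf : IntegrableOn f U) : ∫⁻ x in V, ‖f (x + v) - f x‖ₑ ≤ ‖v‖ₑ * var U f := by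
  have hVU' : ∀ x ∈ V, x ∈ U ∧ x + v ∈ U := fun x hx =>
    ⟨by simpa using hVU x hx 0 (by simp), by simpa using hVU x hx 1 (by simp)⟩
  have hfv : IntegrableOn (fun x => f (x + v)) V :=
    (((measurePreserving_add_right volume v).integrableOn_comp_preimage
      (measurableEmbedding_addRight v)).2 hf).mono_set fun x hx => (hVU' x hx).2
  refine lintegral_enorm_le_of_forall_integral_mul_le hV (by fun_prop)
    (hfv.sub (hf.mono_set fun x hx => (hVU' x hx).1)) fun ψ hψ hc hψV hψ1 => ?_
  have hsupp : tsupport (segmentAverage ψ v) ⊆ U := by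
    refine (tsupport_segmentAverage_subset hc).trans ?_
    rintro _ ⟨⟨x, s⟩, ⟨hx, hs⟩, rfl⟩
    exact hVU x (hψV hx) s hs
  calc ENNReal.ofReal (∫ x in V, (f (x + v) - f x) * ψ x)
      = ENNReal.ofReal (∫ x in U, f x * fderiv ℝ (segmentAverage ψ v) x (-v)) := by
        simp only [map_neg, fderiv_segmentAverage_apply hψ hc, neg_sub]
        rw [setIntegral_translate_sub_mul hU.measurableSet hV.measurableSet hVU' hf hψ.continuous
          hψ1 fun x hx => image_eq_zero_of_notMem_tsupport fun h => hx (hψV h)]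
    _ ≤ ‖-v‖ₑ * var U f :=
        ofReal_integral_mul_fderiv_le_var (contDiff_segmentAverage hψ hc)
          (hasCompactSupport_segmentAverage hc) hsupp (abs_segmentAverage_le hψ1) (-v)
    _ = ‖v‖ₑ * var U f := by rw [enorm_neg]

end Variation

/-! ### Integration over the levels -/

section LayerCake

lemma measurableSet_setOf_not_lt_iff_lt {α : Type*} [MeasurableSpace α] {f g : α → ℝ}
    (hf : Measurable f) (hg : Measurable g) :
    MeasurableSet {p : ℝ × α | ¬(p.1 < f p.2 ↔ p.1 < g p.2)} :=
  ((measurableSet_lt measurable_fst (hf.comp measurable_snd)).iff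
    (measurableSet_lt measurable_fst (hg.comp measurable_snd))).compl

lemma lintegral_measure_setOf_not_lt_iff_lt {α : Type*} [MeasurableSpace α] (μ : Measure α)
    [SFinite μ] {f g : α → ℝ} (hf : Measurable f) (hg : Measurable g) :
    ∫⁻ t : ℝ, μ {x | ¬(t < f x ↔ t < g x)} = ∫⁻ x, ‖g x - f x‖ₑ ∂μ := by
  have hS := measurableSet_setOf_not_lt_iff_lt hf hg
  calc ∫⁻ t : ℝ, μ {x | ¬(t < f x ↔ t < g x)}
      = ∫⁻ x, volume {t : ℝ | ¬(t < f x ↔ t < g x)} ∂μ :=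
        (Measure.prod_apply hS).symm.trans (Measure.prod_apply_symm hS)
    _ = ∫⁻ x, ‖g x - f x‖ₑ ∂μ := lintegral_congr fun x => by
        have hIco : {t : ℝ | ¬(t < f x ↔ t < g x)} = Ico (min (f x) (g x)) (max (f x) (g x)) := by
          ext t
          simp only [mem_ofPred_eq, mem_Ico, min_le_iff, lt_max_iff]
          grind
        rw [hIco, Real.volume_Ico, max_sub_min_eq_abs, Real.enorm_eq_ofReal_abs]

variable {G : Type*} [AddGroup G] [MeasurableSpace G] [MeasurableAdd G] {μ : Measure G}

lemma measurable_measure_crossingSet_superlevel [SFinite μ] {A : Set G} (hA : MeasurableSet A)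
    {g : G → ℝ} (hg : Measurable g) (v : G) :
    Measurable fun t : ℝ => μ (crossingSet A {x | t < g x} v) := by
  have hv : Measurable fun x : G => x + v := measurable_add_const v
  have heq : ∀ t : ℝ, μ (crossingSet A {x | t < g x} v) =
      μ.restrict (A ∩ (fun x => x + v) ⁻¹' A) {x | ¬(t < g x ↔ t < g (x + v))} := fun t => by
    rw [Measure.restrict_apply' (hA.inter (hv hA))]
    congr 1
    ext x
    simp only [mem_crossingSet, mem_inter_iff, mem_preimage, mem_ofPred_eq]
    tauto
  simp only [heq]
  exact measurable_measure_prodMk_left (measurableSet_setOf_not_lt_iff_lt hg (hg.comp hv))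

lemma sum_measure_crossingSet_le {ι : Type*} {J : Finset ι} {A : ι → Set G} {E : Set G}
    (hA : ∀ j ∈ J, MeasurableSet (A j)) (hdisj : (J : Set ι).PairwiseDisjoint A)
    (hE : MeasurableSet E) (v : G) :
    ∑ j ∈ J, μ (crossingSet (A j) E v) ≤
      μ ({x | ¬(x ∈ E ↔ x + v ∈ E)} ∩ ⋃ j ∈ J, A j ∩ (fun x => x + v) ⁻¹' A j) := by
  rw [← measure_biUnion_finset (hdisj.mono fun j x hx => hx.1)
    fun j hj => measurableSet_crossingSet (hA j hj) hE v]
  exact measure_mono <| iUnion₂_subset fun j hj x hx =>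
    ⟨hx.2.2, mem_biUnion hj ⟨hx.1, hx.2.1⟩⟩

end LayerCake

section Superlevels

variable {d : ℕ} {ι : Type*} {J : Finset ι} {A : ι → Set (Ed d)} {g : Ed d → ℝ} {Λ : ι → Set ℝ}

lemma sum_indicator_volume_crossingSet_le (hA : ∀ j ∈ J, MeasurableSet (A j))
    (hg : Measurable g) (t : ℝ) (hdisj : {j | j ∈ J ∧ t ∈ Λ j}.PairwiseDisjoint A) (v : Ed d) :
    ∑ j ∈ J, (Λ j).indicator (fun t => volume (crossingSet (A j) {x | t < g x} v)) t ≤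
      volume.restrict (⋃ j ∈ J, A j ∩ (fun x => x + v) ⁻¹' A j)
        {x | ¬(t < g x ↔ t < g (x + v))} := by
  classical
  have hv : Measurable fun x : Ed d => x + v := measurable_add_const v
  rw [Measure.restrict_apply' <|
    Finset.measurableSet_biUnion J fun j hj => (hA j hj).inter (hv (hA j hj))]
  simp only [indicator_apply]
  rw [← Finset.sum_filter]
  refine (sum_measure_crossingSet_le (fun j hj => hA j (Finset.mem_filter.1 hj).1)
    (by simpa only [Finset.coe_filter] using hdisj) (measurableSet_lt measurable_const hg) v).trans
    (measure_mono (inter_subset_inter_right _ ?_))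
  exact biUnion_subset_biUnion_left fun j hj => (Finset.mem_filter.1 hj).1

lemma sum_lintegral_volume_crossingSet_le (hAo : ∀ j ∈ J, IsOpen (A j))
    (hAc : ∀ j ∈ J, Convex ℝ (A j)) (hgm : Measurable g) (hg : IntegrableOn g (⋃ j ∈ J, A j))
    (hΛm : ∀ j ∈ J, MeasurableSet (Λ j))
    (hΛ : ∀ t, {j | j ∈ J ∧ t ∈ Λ j}.PairwiseDisjoint A) (v : Ed d) :
    ∑ j ∈ J, ∫⁻ t in Λ j, volume (crossingSet (A j) {x | t < g x} v) ≤
      ‖v‖ₑ * var (⋃ j ∈ J, A j) g := by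
  have hAm : ∀ j ∈ J, MeasurableSet (A j) := fun j hj => (hAo j hj).measurableSet
  set V : Set (Ed d) := ⋃ j ∈ J, A j ∩ (fun x => x + v) ⁻¹' A j
  have hV : IsOpen V := isOpen_biUnion fun j hj =>
    (hAo j hj).inter ((hAo j hj).preimage (by fun_prop))
  have hVU : ∀ x ∈ V, ∀ s ∈ Icc (0 : ℝ) 1, x + s • v ∈ ⋃ j ∈ J, A j := by
    intro x hx s hs
    obtain ⟨j, hj, hxj, hxvj⟩ := mem_iUnion₂.1 hx
    exact mem_biUnion hj ((hAc j hj).add_smul_mem hxj hxvj hs)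
  calc ∑ j ∈ J, ∫⁻ t in Λ j, volume (crossingSet (A j) {x | t < g x} v)
      = ∫⁻ t, ∑ j ∈ J,
          (Λ j).indicator (fun t => volume (crossingSet (A j) {x | t < g x} v)) t := by
        rw [lintegral_finsetSum' _ fun j hj => ((measurable_measure_crossingSet_superlevel
          (hAm j hj) hgm v).indicator (hΛm j hj)).aemeasurable]
        exact Finset.sum_congr rfl fun j hj => (lintegral_indicator (hΛm j hj) _).symm
    _ ≤ ∫⁻ t, volume.restrict V {x | ¬(t < g x ↔ t < g (x + v))} :=
        lintegral_mono fun t => sum_indicator_volume_crossingSet_le hAm hgm t (hΛ t) v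
    _ = ∫⁻ x in V, ‖g (x + v) - g x‖ₑ :=
        lintegral_measure_setOf_not_lt_iff_lt _ hgm (hgm.comp (measurable_add_const v))
    _ ≤ ‖v‖ₑ * var (⋃ j ∈ J, A j) g :=
        lintegral_enorm_translate_sub_le_var (isOpen_biUnion hAo) hV hVU hgm hg

lemma measurable_dyadicVariation_superlevel {A : Set (Ed d)} (hA : MeasurableSet A)
    (hg : Measurable g) (m : ℕ) : Measurable fun t : ℝ => dyadicVariation A {x | t < g x} m :=
  (Finset.measurable_fun_sum _ fun _ _ =>
    measurable_measure_crossingSet_superlevel hA hg _).div_const _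

lemma measurable_dyadicPerimeter_superlevel {A : Set (Ed d)} (hA : MeasurableSet A)
    (hg : Measurable g) : Measurable fun t : ℝ => dyadicPerimeter A {x | t < g x} :=
  Measurable.iSup (measurable_dyadicVariation_superlevel hA hg)

lemma sum_lintegral_dyadicVariation_le (hAo : ∀ j ∈ J, IsOpen (A j))
    (hAc : ∀ j ∈ J, Convex ℝ (A j)) (hgm : Measurable g) (hg : IntegrableOn g (⋃ j ∈ J, A j))
    (hΛm : ∀ j ∈ J, MeasurableSet (Λ j))
    (hΛ : ∀ t, {j | j ∈ J ∧ t ∈ Λ j}.PairwiseDisjoint A) (m : ℕ) :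
    ∑ j ∈ J, ∫⁻ t in Λ j, dyadicVariation (A j) {x | t < g x} m ≤
      d * var (⋃ j ∈ J, A j) g := by
  have hpos : (0 : ℝ) < 2⁻¹ ^ m := by positivity
  set ε : ℝ≥0∞ := ENNReal.ofReal (2⁻¹ ^ m)
  have hε0 : ε ≠ 0 := (ENNReal.ofReal_pos.2 hpos).ne'
  let v : Fin d → Ed d := fun i => EuclideanSpace.single i (2⁻¹ ^ m)
  have hv : ∀ i, ‖v i‖ₑ = ε := fun i => by
    rw [← ofReal_norm, PiLp.norm_single, Real.norm_of_nonneg hpos.le]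
  have hmeas : ∀ j ∈ J, ∀ i,
      Measurable fun t : ℝ => volume (crossingSet (A j) {x | t < g x} (v i)) := fun j hj i =>
    measurable_measure_crossingSet_superlevel (hAo j hj).measurableSet hgm _
  calc ∑ j ∈ J, ∫⁻ t in Λ j, dyadicVariation (A j) {x | t < g x} m
      = (∑ i, ∑ j ∈ J, ∫⁻ t in Λ j, volume (crossingSet (A j) {x | t < g x} (v i))) / ε := by
        rw [Finset.sum_comm, ENNReal.div_eq_inv_mul, Finset.mul_sum]
        refine Finset.sum_congr rfl fun j hj => ?_
        rw [← lintegral_finsetSum _ fun i _ => hmeas j hj i,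
          ← lintegral_const_mul _ (Finset.measurable_fun_sum _ fun i _ => hmeas j hj i)]
        simp only [dyadicVariation, ENNReal.div_eq_inv_mul, v, ε]
    _ ≤ (∑ _i : Fin d, ε * var (⋃ j ∈ J, A j) g) / ε := by
        gcongr with i
        exact (sum_lintegral_volume_crossingSet_le hAo hAc hgm hg hΛm hΛ (v i)).trans_eq
          (by rw [hv])
    _ = d * var (⋃ j ∈ J, A j) g := by
        rw [Finset.sum_const, Finset.card_univ, Fintype.card_fin, nsmul_eq_mul, mul_left_comm,
          mul_comm ε, ENNReal.mul_div_cancel_right hε0 ENNReal.ofReal_ne_top]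

lemma sum_lintegral_dyadicPerimeter_le (hAo : ∀ j ∈ J, IsOpen (A j))
    (hAc : ∀ j ∈ J, Convex ℝ (A j)) (hgm : Measurable g) (hg : IntegrableOn g (⋃ j ∈ J, A j))
    (hΛm : ∀ j ∈ J, MeasurableSet (Λ j))
    (hΛ : ∀ t, {j | j ∈ J ∧ t ∈ Λ j}.PairwiseDisjoint A) :
    ∑ j ∈ J, ∫⁻ t in Λ j, dyadicPerimeter (A j) {x | t < g x} ≤ d * var (⋃ j ∈ J, A j) g := by
  have hmono : ∀ j ∈ J, Monotone fun m (t : ℝ) => dyadicVariation (A j) {x | t < g x} m :=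
    fun j hj m k hmk t => monotone_dyadicVariation (hAc j hj) hmk
  calc ∑ j ∈ J, ∫⁻ t in Λ j, dyadicPerimeter (A j) {x | t < g x}
      = ∑ j ∈ J, ⨆ m, ∫⁻ t in Λ j, dyadicVariation (A j) {x | t < g x} m :=
        Finset.sum_congr rfl fun j hj => lintegral_iSup
          (measurable_dyadicVariation_superlevel (hAo j hj).measurableSet hgm) (hmono j hj)
    _ = ⨆ m, ∑ j ∈ J, ∫⁻ t in Λ j, dyadicVariation (A j) {x | t < g x} m := by
        simp only [← Finset.sum_coe_sort J]
        exact ENNReal.finsetSum_iSup_of_monotone fun j m k hmk =>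
          lintegral_mono (hmono j j.2 hmk)
    _ ≤ d * var (⋃ j ∈ J, A j) g :=
        iSup_le fun m => sum_lintegral_dyadicVariation_le hAo hAc hgm hg hΛm hΛ m

end Superlevels

/-! ### Dyadic cubes and superlevel sets -/

section Cubes

variable {d n : ℕ} {𝒬 : Finset (Set (Ed d))} {f : Ed d → ℝ} {t : ℝ}

lemma IsDyadicCube.subset_or_subset {P Q : Set (Ed d)} (hP : IsDyadicCube P)
    (hQ : IsDyadicCube Q) (hPQ : (P ∩ Q).Nonempty) : P ⊆ Q ∨ Q ⊆ P := by
  obtain ⟨p, m, rfl⟩ := hP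
  obtain ⟨q, k, rfl⟩ := hQ
  wlog hpq : p ≤ q generalizing p q m k
  · exact (this q k p m (inter_comm _ _ ▸ hPQ) (le_of_not_ge hpq)).symm
  obtain ⟨x, hxP, hxQ⟩ := hPQ
  obtain ⟨N, rfl⟩ := Int.le.dest hpq
  have hp : (0 : ℝ) < 2 ^ p := by positivity
  refine .inl fun y hy i => ?_
  have hxPi := hxP i
  have hxQi := hxQ i
  rw [zpow_add₀ two_ne_zero, zpow_natCast, mul_assoc, mul_assoc] at hxQi ⊢
  have hleft : (2 : ℤ) ^ N * k i ≤ m i := by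
    have h := lt_of_mul_lt_mul_left (hxQi.1.trans_lt hxPi.2) hp.le
    exact Int.lt_add_one_iff.1 (by exact_mod_cast h)
  have hright : m i + 1 ≤ (2 : ℤ) ^ N * (k i + 1) := by
    have h := lt_of_mul_lt_mul_left (hxPi.1.trans_lt hxQi.2) hp.le
    exact Int.add_one_le_iff.2 (by exact_mod_cast h)
  exact ⟨(mul_le_mul_of_nonneg_left (by exact_mod_cast hleft) hp.le).trans (hy i).1,
    (hy i).2.trans_le (mul_le_mul_of_nonneg_left (by exact_mod_cast hright) hp.le)⟩

lemma pairwiseDisjoint_setOf_isMaximalCube (h𝒬 : ∀ Q ∈ 𝒬, IsDyadicCube Q) :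
    {Q | IsMaximalCube 𝒬 f t Q}.PairwiseDisjoint id := by
  intro P hP Q hQ hPQ
  by_contra hmeet
  rcases (h𝒬 P hP.1).subset_or_subset (h𝒬 Q hQ.1) (not_disjoint_iff_nonempty_inter.1 hmeet)
    with h | h
  · exact hPQ (hP.2.2 Q hQ.1 hQ.2.1 h).symm
  · exact hPQ (hQ.2.2 P hP.1 hP.2.1 h)

lemma measurableSet_setOf_isMaximalCube (𝒬 : Finset (Set (Ed d))) (f : Ed d → ℝ)
    (Q : Set (Ed d)) : MeasurableSet {t : ℝ | IsMaximalCube 𝒬 f t Q} := by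
  have heq : {t : ℝ | IsMaximalCube 𝒬 f t Q} = {_t : ℝ | Q ∈ 𝒬} ∩ (Iio (⨍ z in Q, f z) ∩
      ⋂ P ∈ 𝒬, {t : ℝ | t < (⨍ z in P, f z) → Q ⊆ P → P = Q}) := by
    ext t
    simp only [IsMaximalCube, mem_ofPred_eq, mem_inter_iff, mem_Iio, mem_iInter]
  rw [heq]
  exact (MeasurableSet.const _).inter <| measurableSet_Iio.inter <|
    Finset.measurableSet_biInter _ fun P _ => measurableSet_Iio.imp (MeasurableSet.const _)

lemma measurableSet_setOf_le_measure_inter_superlevel {α : Type*} [MeasurableSpace α]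
    (μ : Measure α) (c : ℝ≥0∞) (f : α → ℝ) (S : Set α) :
    MeasurableSet {t : ℝ | c ≤ μ (S ∩ {x | t < f x})} := by
  have hlower : IsLowerSet {t : ℝ | c ≤ μ (S ∩ {x | t < f x})} := fun s t hts hs =>
    hs.trans (measure_mono (inter_subset_inter_right _ fun x hx => hts.trans_lt hx))
  exact hlower.ordConnected.measurableSet

lemma mtClosure_mono_ae {E F : Set (Ed d)} (hEF : E ≤ᵐ[volume] F) :
    mtClosure E ⊆ mtClosure F := by
  intro x hx
  rw [mtClosure, mem_ofPred_eq] at hx ⊢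
  refine hx.trans_le (limsup_le_limsup (Eventually.of_forall fun r => ?_))
  exact ENNReal.div_le_div_right (measure_mono_ae (EventuallyLE.rfl.inter hEF)) _

lemma IsDyadicCube.hausdorffMeasure_frontier_superlevel_le {Q : Set (Ed (n + 1))}
    (hQ : IsDyadicCube Q) {f g : Ed (n + 1) → ℝ} (hg : Measurable g)
    (hfg : f =ᵐ[volume.restrict (interior Q)] g) {M : ℝ≥0∞}
    (hdens : volume Q ≤ M * volume (Q ∩ {x | t < f x})) :
    μH[(n : ℝ)] (frontier Q \ mtClosure {x | t < f x}) ≤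
      boundaryConst n M * dyadicPerimeter (interior Q) {x | t < g x} := by
  have hEf : (interior Q ∩ {x | t < g x} : Set _) =ᵐ[volume]
      (interior Q ∩ {x | t < f x} : Set _) := by
    filter_upwards [(ae_restrict_iff' isOpen_interior.measurableSet).1 hfg] with x hx
    exact propext (and_congr_right fun h => by simp [hx h])
  set E := interior Q ∩ {x | t < g x}
  have hE : MeasurableSet E :=
    isOpen_interior.measurableSet.inter (measurableSet_lt measurable_const hg)
  have hdensE : volume Q ≤ M * volume (Q ∩ E) := by
    rwa [inter_eq_right.2 (inter_subset_left.trans interior_subset), measure_congr hEf,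
      measure_congr (hQ.interior_ae_eq.inter (ae_eq_refl {x | t < f x}))]
  have hclosure : mtClosure E ⊆ mtClosure {x | t < f x} :=
    mtClosure_mono_ae (hEf.le.trans inter_subset_right.eventuallyLE)
  calc μH[(n : ℝ)] (frontier Q \ mtClosure {x | t < f x})
      ≤ μH[(n : ℝ)] (frontier Q \ mtClosure E) :=
        measure_mono (sdiff_subset_sdiff_right hclosure)
    _ ≤ boundaryConst n M * dyadicPerimeter (interior Q) E :=
        hQ.hausdorffMeasure_frontier_le hE hdensE
    _ = boundaryConst n M * dyadicPerimeter (interior Q) {x | t < g x} := by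
        simp only [dyadicPerimeter, dyadicVariation, E, crossingSet_inter_self]

end Cubes

theorem high_density_cubes_bound_general (d : ℕ) (hd : 1 ≤ d) {M : ℝ≥0∞} (hM : M ≠ ∞) :
    ∃ C : ℝ≥0∞, C ≠ ∞ ∧
      ∀ 𝒬 : Finset (Set (Ed d)), (∀ Q ∈ 𝒬, IsDyadicCube Q) →
        ∀ f : Ed d → ℝ, IntegrableOn f (⋃ Q ∈ 𝒬, interior Q) →
          ∀ Λ : Set (Ed d) → Set ℝ, (∀ Q ∈ 𝒬, MeasurableSet (Λ Q)) →
            (∀ t, {Q | Q ∈ 𝒬 ∧ t ∈ Λ Q}.PairwiseDisjoint id) →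
              (∀ Q ∈ 𝒬, ∀ t ∈ Λ Q, volume Q ≤ M * volume (Q ∩ {x | t < f x})) →
                ∑ Q ∈ 𝒬, ∫⁻ t in Λ Q, μH[(d : ℝ) - 1] (frontier Q \ mtClosure {x | t < f x}) ≤
                  C * var (⋃ Q ∈ 𝒬, interior Q) f := by
  obtain ⟨n, rfl⟩ : ∃ n, d = n + 1 := ⟨d - 1, by omega⟩
  refine ⟨boundaryConst n M * (n + 1 : ℕ), ENNReal.mul_ne_top (boundaryConst_ne_top hM)
    (ENNReal.natCast_ne_top _), fun 𝒬 h𝒬 f hf Λ hΛm hΛ hdens => ?_⟩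
  rw [Nat.cast_add_one, add_sub_cancel_right]
  set U := ⋃ Q ∈ 𝒬, interior Q
  obtain ⟨g, hg, hfg⟩ : ∃ g, Measurable g ∧ f =ᵐ[volume.restrict U] g :=
    ⟨_, hf.1.stronglyMeasurable_mk.measurable, hf.1.ae_eq_mk⟩
  have hmeas : ∀ Q : Set (Ed (n + 1)),
      Measurable fun t : ℝ => dyadicPerimeter (interior Q) {x | t < g x} := fun Q =>
    measurable_dyadicPerimeter_superlevel isOpen_interior.measurableSet hg
  calc ∑ Q ∈ 𝒬, ∫⁻ t in Λ Q, μH[(n : ℝ)] (frontier Q \ mtClosure {x | t < f x})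
      ≤ ∑ Q ∈ 𝒬, ∫⁻ t in Λ Q,
          boundaryConst n M * dyadicPerimeter (interior Q) {x | t < g x} :=
        Finset.sum_le_sum fun Q hQ => setLIntegral_mono' (hΛm Q hQ) fun t ht =>
          (h𝒬 Q hQ).hausdorffMeasure_frontier_superlevel_le hg
            (ae_restrict_of_ae_restrict_of_subset (subset_biUnion_of_mem hQ) hfg) (hdens Q hQ t ht)
    _ = boundaryConst n M * ∑ Q ∈ 𝒬, ∫⁻ t in Λ Q, dyadicPerimeter (interior Q) {x | t < g x} := by
        rw [Finset.mul_sum]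
        exact Finset.sum_congr rfl fun Q _ => lintegral_const_mul _ (hmeas Q)
    _ ≤ boundaryConst n M * ((n + 1 : ℕ) * var U g) := by
        gcongr
        exact sum_lintegral_dyadicPerimeter_le (fun Q _ => isOpen_interior)
          (fun Q hQ => (h𝒬 Q hQ).convex_interior) hg (hf.congr hfg) hΛm
          fun t => (hΛ t).mono_on fun Q _ => interior_subset
    _ = boundaryConst n M * (n + 1 : ℕ) * var U f := by rw [var_congr hfg, mul_assoc]

/-- The high-density part of the variation of the finite dyadic maximal function is bounded:
`Σ_{Q ∈ 𝒬} ∫_{λ : Q ∈ 𝒬_λ, |Q ∩ {f > λ}| ≥ 2^{-d-2}|Q|} σ(∂Q \ cl*{f > λ}) dλ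
  ≤ C_d · var_{⋃ int Q} f`. -/
theorem high_density_cubes_bound (d : ℕ) (hd : 1 ≤ d) :
    ∃ C : ℝ≥0∞, C ≠ ∞ ∧
      ∀ (𝒬 : Finset (Set (Ed d))), (∀ Q ∈ 𝒬, IsDyadicCube Q) →
        ∀ (Ω : Set (Ed d)), IsOpen Ω → (⋃ Q ∈ 𝒬, interior Q) ⊆ Ω →
          ∀ f : Ed d → ℝ, IntegrableOn f Ω volume →
            ∑ Q ∈ 𝒬, ∫⁻ lam in {lam : ℝ | IsMaximalCube 𝒬 f lam Q ∧
                volume Q / 2 ^ (d + 2) ≤ volume (Q ∩ {x | lam < f x})},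
              μH[(d:ℝ) - 1] (frontier Q \ mtClosure {x | lam < f x}) ≤
            C * var (⋃ Q ∈ 𝒬, interior Q) f := by
  obtain ⟨C, hC, hbound⟩ := high_density_cubes_bound_general d hd (M := 2 ^ (d + 2)) (by finiteness)
  refine ⟨C, hC, fun 𝒬 h𝒬 Ω _ hΩ f hf => hbound 𝒬 h𝒬 f (hf.mono_set hΩ) _ (fun Q _ => ?_)
    (fun t => ?_) fun Q _ t ht => ?_⟩
  · exact (measurableSet_setOf_isMaximalCube 𝒬 f Q).inter
      (measurableSet_setOf_le_measure_inter_superlevel volume _ f Q)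
  · exact (pairwiseDisjoint_setOf_isMaximalCube h𝒬).subset fun Q hQ => hQ.2.1
  · exact (ENNReal.div_le_iff' (by positivity) (by finiteness)).1 ht.2

end
end
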